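/- arXiv:1912.09149 — 3 statements merged into one kernel-verified Lean document; each statement's English description precedes it below -/
import Mathlib

section
/- Let f : ℝ^n → ℝ be analytic on an open neighborhood of the origin with f(0) = 0, and let ω be the initial form of f, a nonzero homogeneous polynomial of degree d, so that g = f − ω vanishes to order at least d+1 at the origin. Set Ω = {x ∈ ℝ^n : |x| = 1, ω(x) < 0}. Then there exists a₀ < 0 such that for every a ∈ (a₀, 0) there exists r₀ > 0 such that for every r ∈ (0, r₀], the three sets {x : |x| = r, f(x) ≤ a·r^d}, {x : |x| = r, ω(x) ≤ a·r^d}, and Ω are pairwise homotopy equivalent. -/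
open Asymptotics

open scoped IntermediateField.algebraAdjoinAdjoin in
theorem aux_D_ne_zero {k K : Type} [Field k] [Field K] [Algebra k K] [CharZero k]
    (t : K) (ht : Transcendental k t) : KaehlerDifferential.D k K t ≠ 0 := by
  classical
  obtain ⟨s, hts, hs⟩ := exists_isTranscendenceBasis_superset (R := k) (s := {t})
    ((algebraicIndependent_singleton_iff (⟨t, rfl⟩ : ({t} : Set K))).2 ht)
  let A0 := Algebra.adjoin k (Set.range ((↑) : s → K))
  let F := IntermediateField.adjoin k (Set.range ((↑) : s → K))
  have : CharZero F := charZero_of_injective_algebraMap (algebraMap k F).injective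
  have : Algebra.IsAlgebraic F K := hs.isAlgebraic_field
  have : Algebra.FormallyEtale A0 F := .of_isLocalization (nonZeroDivisors _)
  have : Algebra.FormallyEtale F K := .of_isSeparable F K
  have : Algebra.FormallyEtale A0 K := .comp A0 F K
  let e : MvPolynomial s k ≃ₐ[k] A0 := hs.1.aevalEquiv
  let v : MvPolynomial s k →ₐ[k] K := MvPolynomial.aeval ((↑) : s → K)
  have hv : ∀ a : A0, v (e.symm a) = (a : K) := by
    intro a
    obtain ⟨p, rfl⟩ := e.surjective a
    rw [e.symm_apply_apply]
    exact (hs.1.algebraMap_aevalEquiv p).symm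
  let i : s := ⟨t, hts rfl⟩
  let d : Derivation k A0 K := Derivation.mk'
    (v.toLinearMap ∘ₗ (MvPolynomial.pderiv i).toLinearMap ∘ₗ e.symm.toLinearMap) (by
      intro a b
      simp only [LinearMap.comp_apply, AlgEquiv.toLinearMap_apply, map_mul,
        Derivation.coeFn_coe, Derivation.leibniz, map_add, AlgHom.toLinearMap_apply,
        smul_eq_mul, hv]
      simp [Algebra.smul_def])
  have hT : (e (MvPolynomial.X i) : K) = t := by
    rw [← hv, e.symm_apply_apply]; simp [v, i]
  intro h0
  have h1 : KaehlerDifferential.D k K (algebraMap A0 K (e (MvPolynomial.X i))) = 0 := by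
    rw [← h0]; congr 1
  have h2 := KaehlerDifferential.tensorKaehlerEquivOfFormallyEtale_symm_D_algebraMap k A0 K
    (e (MvPolynomial.X i))
  rw [h1, map_zero] at h2
  have h3 := congrArg (LinearMap.liftBaseChange K d.liftKaehlerDifferential) h2
  simp only [map_zero, LinearMap.liftBaseChange_tmul, Derivation.liftKaehlerDifferential_comp_D,
    one_smul] at h3
  have : d (e (MvPolynomial.X i)) = 1 := by
    change v (MvPolynomial.pderiv i (e.symm (e (MvPolynomial.X i)))) = 1
    simp
  rw [this] at h3
  exact zero_ne_one h3

theorem aux_chain {k K σ : Type} [Fintype σ] [Field k] [Field K] [Algebra k K] (x : σ → K)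
    (P : MvPolynomial σ k) : KaehlerDifferential.D k K (MvPolynomial.aeval x P) =
      ∑ i, MvPolynomial.aeval x (MvPolynomial.pderiv i P) • KaehlerDifferential.D k K (x i) := by
  classical
  induction P using MvPolynomial.induction_on with
  | C a => simp
  | add p q hp hq => simp [hp, hq, add_smul, Finset.sum_add_distrib]
  | mul_X p j hp =>
    simp only [map_mul, MvPolynomial.aeval_X, Derivation.leibniz, hp, map_add, smul_eq_mul,
      add_smul, Finset.sum_add_distrib, Finset.smul_sum, smul_smul, MvPolynomial.pderiv_X]
    congr 1
    simp [Pi.single_apply, apply_ite (MvPolynomial.aeval x), ite_smul]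

theorem aux_crit {σ : Type} [Fintype σ] (P : MvPolynomial σ ℝ) :
    ∃ Q : Polynomial ℝ, Q ≠ 0 ∧ ∀ x : σ → ℝ, ∑ i, x i ^ 2 = 1 →
      (∃ l : ℝ, ∀ i, MvPolynomial.eval x (MvPolynomial.pderiv i P) = l * x i) →
      Q.eval (MvPolynomial.eval x P) = 0 := by
  classical
  let L : MvPolynomial σ ℝ := ∑ j, MvPolynomial.X j * MvPolynomial.pderiv j P
  let S : MvPolynomial σ ℝ := ∑ j, MvPolynomial.X j ^ 2 - 1
  let I : Ideal (MvPolynomial σ ℝ) := Ideal.span (insert S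
    (Set.range fun i => MvPolynomial.pderiv i P - L * MvPolynomial.X i))
  have key : ∀ p : Ideal (MvPolynomial σ ℝ), p ∈ I.minimalPrimes →
      ∃ Q : Polynomial ℝ, Q ≠ 0 ∧ Polynomial.aeval P Q ∈ p := by
    intro p hp
    have : p.IsPrime := hp.1.1
    have hI : I ≤ p := hp.1.2
    let A := MvPolynomial σ ℝ ⧸ p
    let K := FractionRing A
    let φ : MvPolynomial σ ℝ →ₐ[ℝ] K := (IsScalarTower.toAlgHom ℝ A K).comp (Ideal.Quotient.mkₐ ℝ p)
    have hker : ∀ q, φ q = 0 ↔ q ∈ p := by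
      intro q
      rw [← Ideal.Quotient.eq_zero_iff_mem]
      change algebraMap A K _ = 0 ↔ _
      rw [FaithfulSMul.algebraMap_eq_zero_iff A K]
      rfl
    let x : σ → K := fun i => φ (MvPolynomial.X i)
    have hx : ∀ q, MvPolynomial.aeval x q = φ q := by
      intro q
      have : MvPolynomial.aeval x = φ := by ext i; simp [x]
      rw [this]
    have h1 : ∑ j, x j ^ 2 = 1 := by
      have := (hker S).2 (hI (Ideal.subset_span (by simp)))
      simp only [S, map_sub, map_sum, map_pow, map_one] at this
      exact sub_eq_zero.1 this
    have h2 : ∀ i, φ (MvPolynomial.pderiv i P) = φ L * x i := by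
      intro i
      have := (hker (MvPolynomial.pderiv i P - L * MvPolynomial.X i)).2
        (hI (Ideal.subset_span (by simp)))
      simp only [map_sub, map_mul] at this
      exact sub_eq_zero.1 this
    have h3 : KaehlerDifferential.D ℝ K (φ P) = 0 := by
      rw [← hx, aux_chain]
      have h4 : (2 : K) • ∑ i, x i • KaehlerDifferential.D ℝ K (x i) = 0 := by
        have h5 := congrArg (KaehlerDifferential.D ℝ K) h1
        simp only [map_sum, Derivation.leibniz_pow, Derivation.map_one_eq_zero] at h5
        rw [← h5, Finset.smul_sum]
        refine Finset.sum_congr rfl fun i _ => ?_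
        rw [two_smul, two_smul]; simp
      have h5 : ∑ i, x i • KaehlerDifferential.D ℝ K (x i) = 0 := by
        have : CharZero K := charZero_of_injective_algebraMap (algebraMap ℝ K).injective
        exact (smul_eq_zero.1 h4).resolve_left two_ne_zero
      calc _ = φ L • ∑ i, x i • KaehlerDifferential.D ℝ K (x i) := by
            rw [Finset.smul_sum]
            refine Finset.sum_congr rfl fun i _ => ?_
            rw [hx, h2, mul_smul]
        _ = 0 := by rw [h5, smul_zero]
    have h6 : IsAlgebraic ℝ (φ P) := by
      by_contra hc
      exact aux_D_ne_zero _ hc h3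
    obtain ⟨Q, hQ, hQ2⟩ := h6
    refine ⟨Q, hQ, (hker _).1 ?_⟩
    rw [← hQ2, Polynomial.aeval_algHom_apply]
  choose! q hq hq2 using key
  have hfin := Ideal.finite_minimalPrimes_of_isNoetherianRing _ I
  refine ⟨∏ p ∈ hfin.toFinset, q p, Finset.prod_ne_zero_iff.2 fun p hp => hq p (by simpa using hp), ?_⟩
  rintro x hx ⟨l, hl⟩
  let J : Ideal (MvPolynomial σ ℝ) := RingHom.ker (MvPolynomial.eval x)
  have : J.IsPrime := RingHom.ker_isPrime _
  have hIJ : I ≤ J := by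
    rw [Ideal.span_le]
    have hL : MvPolynomial.eval x L = l := by
      simp only [L, map_sum, map_mul, MvPolynomial.eval_X, hl]
      calc _ = l * ∑ i, x i ^ 2 := by rw [Finset.mul_sum]; exact Finset.sum_congr rfl fun i _ => by ring
        _ = l := by rw [hx, mul_one]
    rintro _ (rfl | ⟨i, rfl⟩)
    · simp [J, S, RingHom.mem_ker, hx]
    · simp [J, RingHom.mem_ker, hL, hl]
  obtain ⟨p, hp, hpJ⟩ := Ideal.exists_minimalPrimes_le hIJ
  have h7 : MvPolynomial.eval x (Polynomial.aeval P (q p)) = 0 := hpJ (hq2 p hp)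
  have h8 : (q p).eval (MvPolynomial.eval x P) = 0 := by
    rw [← h7]
    have := Polynomial.aeval_algHom_apply (MvPolynomial.aeval x : MvPolynomial σ ℝ →ₐ[ℝ] ℝ) P (q p)
    simpa [MvPolynomial.aeval_eq_eval, Polynomial.aeval_def, Polynomial.eval₂_eq_eval_map] using this
  rw [Polynomial.eval_prod]
  exact Finset.prod_eq_zero (by simpa using hp) h8

theorem aux_bigO {E : Type} [NormedAddCommGroup E] [NormedSpace ℝ E] (g : E → ℝ) (d : ℕ)
    (hg : AnalyticAt ℝ g 0) (hO : g =O[nhds 0] fun x => ‖x‖ ^ (d + 1)) :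
    fderiv ℝ g =O[nhds 0] fun x => ‖x‖ ^ d := by
  obtain ⟨p, r, hp⟩ := hg
  have hz : ∀ k, k ≤ d → ∀ y : E, (p k fun _ => y) = 0 := by
    intro k
    refine Nat.strong_induction_on k fun k hk hkd => ?_
    have psum_eq : p.partialSum (k + 1) = fun y => p k fun _ => y := by
      funext z
      refine Finset.sum_eq_single _ (fun b hb hnb => ?_) fun hn => ?_
      · have := Finset.mem_range_succ_iff.mp hb
        exact hk b (this.lt_of_ne hnb) (this.trans hkd) z
      · exact False.elim (hn (Finset.mem_range.mpr (lt_add_one k)))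
    have h := hp.hasFPowerSeriesAt.isBigO_sub_partialSum_pow (k + 1)
    simp only [psum_eq, zero_add] at h
    have h2 : g =O[nhds 0] fun x => ‖x‖ ^ (k + 1) := by
      refine hO.trans ?_
      refine IsBigO.of_bound 1 ?_
      filter_upwards [Metric.ball_mem_nhds (0 : E) one_pos] with x hx
      rw [mem_ball_zero_iff] at hx
      simp only [norm_pow, norm_norm, one_mul]
      exact pow_le_pow_of_le_one (norm_nonneg _) hx.le (by omega)
    have h3 : (fun y => p k fun _ => y) =O[nhds 0] fun x => ‖x‖ ^ (k + 1) := by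
      have := h2.sub h
      simpa using this
    exact h3.continuousMultilinearMap_apply_eq_zero
  let p' : FormalMultilinearSeries ℝ E ℝ := fun k => if k ≤ d then 0 else p k
  have hp' : HasFPowerSeriesOnBall g p' 0 r := by
    refine ⟨hp.r_le.trans ?_, hp.r_pos, fun {y} hy => ?_⟩
    · refine FormalMultilinearSeries.radius_le_of_le fun {n} => ?_
      by_cases h : n ≤ d <;> simp [p', h]
    · have := hp.hasSum hy
      convert this using 2 with k
      by_cases h : k ≤ d <;> simp [p', h, hz]
  have hd := hp'.fderiv.hasFPowerSeriesAt.isBigO_sub_partialSum_pow d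
  have h0 : ∀ y, p'.derivSeries.partialSum d y = 0 := by
    intro y
    refine Finset.sum_eq_zero fun k hk => ?_
    rw [p'.derivSeries_eq_zero (by simp [p', Nat.succ_le_of_lt (Finset.mem_range.1 hk)])]
    simp
  simpa [h0] using hd


theorem aux_retract {Y : Type} [TopologicalSpace Y] (A : Set Y) (H : ℝ → Y → Y)
    (hH : Continuous fun p : ℝ × Y => H p.1 p.2) (h0 : ∀ x, H 0 x = x)
    (h1 : ∀ x, H 1 x ∈ A) (hA : ∀ s ∈ Set.Icc (0 : ℝ) 1, ∀ x ∈ A, H s x ∈ A) :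
    Nonempty (ContinuousMap.HomotopyEquiv A Y) := by
  let i : C(A, Y) := ⟨Subtype.val, continuous_subtype_val⟩
  let j : C(Y, A) := ⟨fun x => ⟨H 1 x, h1 x⟩, by
    refine Continuous.subtype_mk ?_ _
    exact hH.comp (by fun_prop : Continuous fun x : Y => ((1 : ℝ), x))⟩
  let F : ContinuousMap.Homotopy (ContinuousMap.id A) (j.comp i) :=
    { toFun := fun p => ⟨H p.1 p.2, hA _ p.1.2 _ p.2.2⟩
      continuous_toFun := by
        refine Continuous.subtype_mk ?_ _
        exact hH.comp (by fun_prop : Continuous fun p : unitInterval × A => ((p.1 : ℝ), (p.2 : Y)))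
      map_zero_left := fun x => by simp [h0]
      map_one_left := fun x => by simp [i, j] }
  let G : ContinuousMap.Homotopy (ContinuousMap.id Y) (i.comp j) :=
    { toFun := fun p => H p.1 p.2
      continuous_toFun :=
        hH.comp (by fun_prop : Continuous fun p : unitInterval × Y => ((p.1 : ℝ), (p.2 : Y)))
      map_zero_left := fun x => by simp [h0]
      map_one_left := fun x => by simp [i, j] }
  exact ⟨⟨i, j, ⟨F.symm⟩, ⟨G.symm⟩⟩⟩

/-- Iterated steps up to time `t`. -/
def auxFlow {Y : Type} (e : ℝ → Y → Y) : ℕ → ℝ → Y → Y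
  | 0, _, x => x
  | m + 1, t, x => e (t - m) (auxFlow e m t x)

theorem aux_steps {Y : Type} [MetricSpace Y] (A : Set Y) (e : ℝ → Y → Y)
    (he : Continuous fun p : ℝ × Y => e p.1 p.2) (he0 : ∀ s ≤ 0, ∀ x, e s x = x)
    (he1 : ∀ s ≥ 1, ∀ x, e s x = e 1 x)
    (hA : ∀ s, ∀ x ∈ A, e s x ∈ A) (hreach : ∀ x, ∃ k : ℕ, (e 1)^[k] x ∈ interior A) :
    Nonempty (ContinuousMap.HomotopyEquiv A Y) := by
  have hcont : ∀ m, Continuous fun p : ℝ × Y => auxFlow e m p.1 p.2 := by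
    intro m
    induction m with
    | zero => exact continuous_snd
    | succ m ih =>
      exact he.comp ((by fun_prop : Continuous fun p : ℝ × Y => p.1 - m).prodMk ih)
  have hstab : ∀ (m : ℕ) (t : ℝ) x, t ≤ m → ∀ m' : ℕ, m ≤ m' → auxFlow e m' t x = auxFlow e m t x := by
    intro m t x ht m' hm
    induction m', hm using Nat.le_induction with
    | base => rfl
    | succ k hk ih =>
      rw [auxFlow, he0 _ _, ih]
      have : (m : ℝ) ≤ k := by exact_mod_cast hk
      linarith
  have hiter : ∀ (m : ℕ) (t : ℝ) x, (m : ℝ) ≤ t → auxFlow e m t x = (e 1)^[m] x := by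
    intro m t x
    induction m with
    | zero => intro _; rfl
    | succ m ih =>
      intro h
      push_cast at h
      rw [auxFlow, he1 _ (by linarith), ih (by linarith), Function.iterate_succ_apply']
  have hpres : ∀ (k m : ℕ) (t : ℝ) x, auxFlow e k t x ∈ A → k ≤ m → auxFlow e m t x ∈ A := by
    intro k m t x h hkm
    induction m, hkm using Nat.le_induction with
    | base => exact h
    | succ k hk ih => exact hA _ _ ih
  let Ψ : ℝ → Y → Y := fun t x => auxFlow e ⌈t⌉₊ t x
  have hΨ : ∀ (m : ℕ) (t : ℝ) x, t ≤ m → Ψ t x = auxFlow e m t x := by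
    intro m t x h
    exact (hstab _ t x (Nat.le_ceil t) m (Nat.ceil_le.2 h)).symm
  have hΨc : Continuous fun p : ℝ × Y => Ψ p.1 p.2 := by
    rw [continuous_iff_continuousAt]
    rintro ⟨t, x⟩
    refine ((hcont ⌈t + 1⌉₊).continuousAt (x := (t, x))).congr ?_
    have : ∀ᶠ p : ℝ × Y in nhds (t, x), p.1 < t + 1 :=
      (continuous_fst.tendsto (t, x)).eventually (gt_mem_nhds (by simp))
    filter_upwards [this] with p hp
    exact (hΨ _ _ _ (hp.le.trans (Nat.le_ceil _))).symm
  obtain ⟨τ, hτ⟩ := exists_continuous_forall_mem_convex_of_local_const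
    (t := fun y : Y => {t : ℝ | ∀ s ≥ t, Ψ s y ∈ A}) (by
      intro y
      refine Set.OrdConnected.convex ⟨fun a ha b hb c hc s hs => ha s (hc.1.trans hs)⟩) (by
      intro x
      obtain ⟨k, hk⟩ := hreach x
      refine ⟨k, ?_⟩
      have hc : Continuous (e 1) := he.comp (by fun_prop : Continuous fun x : Y => ((1 : ℝ), x))
      have := (hc.iterate k).continuousAt.eventually (mem_interior_iff_mem_nhds.1 hk)
      filter_upwards [this] with y hy s hs
      refine hpres k _ s y ?_ ?_
      · rw [hiter k s y hs]; exact hy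
      · exact_mod_cast hs.le.trans (Nat.le_ceil s))
  refine aux_retract A (fun s x => Ψ (s * max (τ x) 0) x) ?_ ?_ ?_ ?_
  · exact hΨc.comp (by fun_prop : Continuous fun p : ℝ × Y => (p.1 * max (τ p.2) 0, p.2))
  · intro x; simp [Ψ, auxFlow]
  · intro x; exact hτ x _ (by simp)
  · intro s hs x hx
    exact hpres 0 _ _ _ hx (Nat.zero_le _)

theorem aux_descent {E : Type} [NormedAddCommGroup E] [InnerProductSpace ℝ E] [FiniteDimensional ℝ E]
    (W : E → ℝ) (hW : ContDiffOn ℝ 2 W {0}ᶜ) (v : E → E)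
    (hv : ∀ x w, fderiv ℝ W x w = inner ℝ (v x) w)
    (hvc : ContinuousOn v (Metric.sphere 0 1))
    (horth : ∀ x, ‖x‖ = 1 → inner ℝ (v x) x = 0) :
    ∃ η > (0 : ℝ), ∀ x, ‖x‖ = 1 → ∀ s ∈ Set.Icc 0 η,
      W (x - s • v x) ≤ W x - s / 2 * ‖v x‖ ^ 2 := by
  obtain ⟨M, hM⟩ := (isCompact_sphere (0 : E) 1).exists_bound_of_continuousOn hvc
  have hop : IsOpen ({0}ᶜ : Set E) := isOpen_compl_singleton
  have hdW : ContDiffOn ℝ 1 (fderiv ℝ W) {0}ᶜ := hW.fderiv_of_isOpen hop (by norm_num)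
  have hddW : ContinuousOn (fderiv ℝ (fderiv ℝ W)) {0}ᶜ :=
    hdW.continuousOn_fderiv_of_isOpen hop (by norm_num)
  let K : Set E := Metric.closedBall 0 (1 + M) \ Metric.ball 0 1
  have hK : IsCompact K := (isCompact_closedBall _ _).diff Metric.isOpen_ball
  have hK0 : K ⊆ {0}ᶜ := by
    rintro x hx rfl
    exact hx.2 (by simp)
  obtain ⟨L, hL⟩ := hK.exists_bound_of_continuousOn (E := E →L[ℝ] E →L[ℝ] ℝ)
    (f := fderiv ℝ (fderiv ℝ W)) (hddW.mono hK0)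
  have hη : 0 < 1 / (2 * (|L| + 1)) := by positivity
  refine ⟨min 1 (1 / (2 * (|L| + 1))), lt_min one_pos hη, fun x hx s hs => ?_⟩
  have hs1 : s ≤ 1 := hs.2.trans (min_le_left _ _)
  have hs2 : s ≤ 1 / (2 * (|L| + 1)) := hs.2.trans (min_le_right _ _)
  have hs0 : 0 ≤ s := hs.1
  have hnorm : ∀ t : ℝ, ‖x - t • v x‖ ^ 2 = 1 + t ^ 2 * ‖v x‖ ^ 2 := by
    intro t
    rw [norm_sub_sq_real, hx, inner_smul_right, real_inner_comm, horth x hx, norm_smul, mul_pow,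
      Real.norm_eq_abs, sq_abs]
    ring
  have hMx : ‖v x‖ ≤ M := hM x (by simp [hx])
  let sg : Set E := segment ℝ x (x - s • v x)
  have hsg : ∀ z ∈ sg, z ∈ K ∧ ‖z - x‖ ≤ s * ‖v x‖ := by
    intro z hz
    rw [show sg = segment ℝ x (x - s • v x) from rfl, segment_eq_image'] at hz
    obtain ⟨θ, hθ, rfl⟩ := hz
    have e1 : x + θ • (x - s • v x - x) = x - (θ * s) • v x := by
      rw [mul_smul]; module
    have h0 : 0 ≤ θ * s := mul_nonneg hθ.1 hs0
    have h1 : θ * s ≤ s := by nlinarith [hθ.2]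
    simp only [e1]
    have h3 : ‖x - (θ * s) • v x - x‖ = θ * s * ‖v x‖ := by
      rw [sub_sub_cancel_left, norm_neg, norm_smul, Real.norm_of_nonneg h0]
    refine ⟨⟨?_, ?_⟩, ?_⟩
    · rw [mem_closedBall_zero_iff]
      calc _ ≤ ‖x‖ + ‖(θ * s) • v x‖ := norm_sub_le _ _
        _ ≤ 1 + M := by
          rw [hx, norm_smul, Real.norm_of_nonneg h0]
          nlinarith [norm_nonneg (v x)]
    · rw [mem_ball_zero_iff, not_lt]
      have := hnorm (θ * s)
      have h4 : 0 ≤ (θ * s) ^ 2 * ‖v x‖ ^ 2 := by positivity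
      by_contra hc
      push Not at hc
      nlinarith [norm_nonneg (x - (θ * s) • v x)]
    · rw [h3]; gcongr
  have hcv : Convex ℝ sg := convex_segment _ _
  have hxs : x ∈ sg := left_mem_segment _ _ _
  have hys : x - s • v x ∈ sg := right_mem_segment _ _ _
  have b1 : ∀ z ∈ sg, ‖fderiv ℝ W z - fderiv ℝ W x‖ ≤ |L| * (s * ‖v x‖) := by
    intro z hz
    have := hcv.norm_image_sub_le_of_norm_hasFDerivWithin_le (𝕜 := ℝ) (f := fderiv ℝ W)
      (f' := fderiv ℝ (fderiv ℝ W)) (C := |L|) (fun y hy => by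
        have : ContDiffAt ℝ 1 (fderiv ℝ W) y :=
          hdW.contDiffAt (hop.mem_nhds (hK0 (hsg y hy).1))
        exact (this.differentiableAt (by norm_num)).hasFDerivAt.hasFDerivWithinAt)
      (fun y hy => (hL y (hsg y hy).1).trans (le_abs_self L)) hxs hz
    exact this.trans (by gcongr; exact (hsg z hz).2)
  have b2 := hcv.norm_image_sub_le_of_norm_hasFDerivWithin_le' (𝕜 := ℝ) (f := W)
      (f' := fderiv ℝ W) (φ := fderiv ℝ W x) (C := |L| * (s * ‖v x‖)) (fun y hy => by
        have : ContDiffAt ℝ 2 W y :=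
          hW.contDiffAt (hop.mem_nhds (hK0 (hsg y hy).1))
        exact (this.differentiableAt (by norm_num)).hasFDerivAt.hasFDerivWithinAt)
      b1 hxs hys
  rw [sub_sub_cancel_left, norm_neg, norm_smul, Real.norm_of_nonneg hs0, hv, inner_neg_right,
    inner_smul_right, real_inner_self_eq_norm_sq, Real.norm_eq_abs] at b2
  have b3 := (abs_le.1 b2).2
  have b4 : |L| * s ≤ 1 / 2 := by
    have : s * (2 * (|L| + 1)) ≤ 1 := (le_div_iff₀ (by positivity)).1 hs2
    nlinarith
  have b5 : |L| * s * (s * ‖v x‖ ^ 2) ≤ 1 / 2 * (s * ‖v x‖ ^ 2) := by gcongr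
  nlinarith

theorem aux_unit_dist {E : Type} [NormedAddCommGroup E] [InnerProductSpace ℝ E] (x w : E)
    (hx : ‖x‖ = 1) (h : inner ℝ w x = 0) :
    1 ≤ ‖x - w‖ ∧ ‖‖x - w‖⁻¹ • (x - w) - x‖ ≤ 2 * ‖w‖ := by
  have h1 : 1 ≤ ‖x - w‖ := by
    have : ‖x - w‖ ^ 2 = 1 + ‖w‖ ^ 2 := by
      rw [norm_sub_sq_real, hx, real_inner_comm, h]; ring
    by_contra hc
    push Not at hc
    nlinarith [norm_nonneg (x - w), sq_nonneg ‖w‖]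
  refine ⟨h1, ?_⟩
  set z := x - w
  have h2 : ‖‖z‖⁻¹ • z - z‖ = ‖z‖ - 1 := by
    have : ‖z‖⁻¹ • z - z = (‖z‖⁻¹ - 1) • z := by module
    rw [this, norm_smul, Real.norm_eq_abs, abs_sub_comm, abs_of_nonneg]
    · field_simp
    · have := inv_le_one_of_one_le₀ h1
      linarith
  have h3 : ‖z - x‖ = ‖w‖ := by simp [z]
  have h4 : ‖z‖ ≤ 1 + ‖w‖ := by
    calc ‖z‖ ≤ ‖x‖ + ‖w‖ := norm_sub_le _ _
      _ = _ := by rw [hx]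
  calc _ ≤ ‖‖z‖⁻¹ • z - z‖ + ‖z - x‖ := norm_sub_le_norm_sub_add_norm_sub _ _ _
    _ ≤ _ := by rw [h2, h3]; linarith
theorem aux_main {E : Type} [NormedAddCommGroup E] [InnerProductSpace ℝ E] [FiniteDimensional ℝ E]
    (ω : E → ℝ) (hω : Continuous ω) (v : E → E)
    (hvc : ContinuousOn v (Metric.sphere 0 1))
    (horth : ∀ x, ‖x‖ = 1 → inner ℝ (v x) x = 0)
    (η : ℝ) (hη : 0 < η) (hdesc : ∀ x, ‖x‖ = 1 → ∀ s ∈ Set.Icc 0 η,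
      ω (‖x - s • v x‖⁻¹ • (x - s • v x)) ≤ ω x - s / 2 * ‖v x‖ ^ 2)
    (a₀ : ℝ) (hcrit : ∀ x, ‖x‖ = 1 → ω x ∈ Set.Ioo a₀ 0 → v x ≠ 0)
    (a : ℝ) (ha : a ∈ Set.Ioo a₀ 0) :
    ∃ ε > (0 : ℝ), ∀ F : E → ℝ, (∀ x, ‖x‖ = 1 → |F x - ω x| ≤ ε) →
      (∀ x y, ‖x‖ = 1 → ‖y‖ = 1 → |(F x - ω x) - (F y - ω y)| ≤ ε * ‖x - y‖) →
      Nonempty (ContinuousMap.HomotopyEquiv {x : E | ‖x‖ = 1 ∧ F x ≤ a}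
        {x : E | ‖x‖ = 1 ∧ ω x < 0}) := by
  obtain ⟨ε, hε, hε1, hε2⟩ : ∃ ε > (0 : ℝ), a₀ < a - ε ∧ a + ε < 0 := by
    obtain ⟨h1, h2⟩ := ha
    refine ⟨min ((a - a₀) / 2) (-a / 2), by apply lt_min <;> linarith, ?_, ?_⟩
    · have := min_le_left ((a - a₀) / 2) (-a / 2); linarith
    · have := min_le_right ((a - a₀) / 2) (-a / 2); linarith
  -- lower bound for the gradient
  let K : Set E := Metric.sphere 0 1 ∩ ω ⁻¹' Set.Icc (a - ε) (a + ε)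
  have hK : IsCompact K := (isCompact_sphere _ _).inter_right (isClosed_Icc.preimage hω)
  obtain ⟨m, hm, hmK⟩ : ∃ m > (0 : ℝ), ∀ x ∈ K, m ≤ ‖v x‖ := by
    rcases K.eq_empty_or_nonempty with h | h
    · exact ⟨1, one_pos, by simp [h]⟩
    · obtain ⟨x, hx, hmin⟩ := hK.exists_isMinOn h ((hvc.mono Set.inter_subset_left).norm)
      refine ⟨‖v x‖, norm_pos_iff.2 (hcrit x (by simpa using hx.1) ⟨?_, ?_⟩), fun y hy => hmin hy⟩
      · have := hx.2.1; linarith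
      · have := hx.2.2; linarith
  refine ⟨min ε (m / 4), lt_min hε (by positivity), fun F hF hFL => ?_⟩
  have hFε : ∀ x, ‖x‖ = 1 → |F x - ω x| ≤ ε := fun x hx => (hF x hx).trans (min_le_left _ _)
  let Ω : Set E := {x : E | ‖x‖ = 1 ∧ ω x < 0}
  -- the step
  let c : ℝ → ℝ := fun s => η * max 0 (min s 1)
  have hc : ∀ s, c s ∈ Set.Icc 0 η := by
    intro s
    refine ⟨by positivity, ?_⟩
    have : max 0 (min s 1) ≤ 1 := max_le zero_le_one (min_le_right _ _)
    nlinarith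
  let st : ℝ → E → E := fun s x => ‖x - c s • v x‖⁻¹ • (x - c s • v x)
  have hst1 : ∀ s x, ‖x‖ = 1 → 1 ≤ ‖x - c s • v x‖ ∧ ‖st s x - x‖ ≤ 2 * (c s * ‖v x‖) := by
    intro s x hx
    have := aux_unit_dist x (c s • v x) hx (by rw [real_inner_smul_left, horth x hx, mul_zero])
    rwa [norm_smul, Real.norm_of_nonneg (hc s).1] at this
  have hst2 : ∀ s x, ‖x‖ = 1 → ‖st s x‖ = 1 := by
    intro s x hx
    have := (hst1 s x hx).1
    simp only [st]
    rw [norm_smul, norm_inv, norm_norm, inv_mul_cancel₀ (by linarith)]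
  have hst3 : ∀ s x, ‖x‖ = 1 → ω (st s x) ≤ ω x - c s / 2 * ‖v x‖ ^ 2 :=
    fun s x hx => hdesc x hx _ (hc s)
  have hst4 : ∀ s x, ‖x‖ = 1 → ω (st s x) ≤ ω x := by
    intro s x hx
    have h1 := hst3 s x hx
    have h2 : 0 ≤ c s / 2 * ‖v x‖ ^ 2 := by have := (hc s).1; positivity
    linarith
  have hcc : Continuous c := by fun_prop
  have hstc : ContinuousOn (fun p : ℝ × E => st p.1 p.2) (Set.univ ×ˢ Metric.sphere 0 1) := by
    have h1 : ContinuousOn (fun p : ℝ × E => p.2 - c p.1 • v p.2)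
        (Set.univ ×ˢ Metric.sphere 0 1) := by
      refine continuousOn_snd.sub ((hcc.comp continuous_fst).continuousOn.smul ?_)
      exact hvc.comp continuousOn_snd fun p hp => hp.2
    refine (h1.norm.inv₀ fun p hp => ?_).smul h1
    have := (hst1 p.1 p.2 (by simpa using hp.2)).1
    linarith
  let e : ℝ → Ω → Ω := fun s x => ⟨st s x, hst2 s x x.2.1, (hst4 s x x.2.1).trans_lt x.2.2⟩
  have heC : Continuous fun p : ℝ × Ω => e p.1 p.2 := by
    refine Continuous.subtype_mk ?_ _
    refine hstc.comp_continuous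
      (by fun_prop : Continuous fun p : ℝ × Ω => (p.1, (p.2 : E))) fun p => ⟨trivial, ?_⟩
    simpa using p.2.2.1
  let A : Set Ω := {x | F x ≤ a}
  have hmain : Nonempty (ContinuousMap.HomotopyEquiv A Ω) := by
    refine aux_steps A e heC ?_ ?_ ?_ ?_
    · intro s hs x
      apply Subtype.ext
      have hc0 : c s = 0 := by
        have : max 0 (min s 1) = 0 := max_eq_left ((min_le_left _ _).trans hs)
        simp [c, this]
      simp [e, st, hc0, x.2.1]
    · intro s hs x
      apply Subtype.ext
      have hc0 : c s = c 1 := by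
        simp [c, min_eq_right hs]
      simp [e, st, hc0]
    · rintro s ⟨x, hx⟩ hxA
      have hxa : F x ≤ a := hxA
      change F (st s x) ≤ a
      have k1 := abs_le.1 (hFε x hx.1)
      have k2 := abs_le.1 (hFε (st s x) (hst2 s x hx.1))
      by_cases hcase : ω x ≤ a - ε
      · have := hst4 s x hx.1
        linarith [k2.2]
      · push Not at hcase
        have hxK : x ∈ K := ⟨by simpa using hx.1, hcase.le, by linarith [k1.1]⟩
        have hmx := hmK x hxK
        have k3 := (abs_le.1 (hFL (st s x) x (hst2 s x hx.1) hx.1)).2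
        have k4 := hst3 s x hx.1
        have k5 := (hst1 s x hx.1).2
        have k6 : min ε (m / 4) ≤ ‖v x‖ / 4 := (min_le_right _ _).trans (by linarith)
        have k7 : min ε (m / 4) * ‖st s x - x‖ ≤ ‖v x‖ / 4 * (2 * (c s * ‖v x‖)) := by
          gcongr
        nlinarith
    · rintro x
      by_contra hcon
      push Not at hcon
      have hge : ∀ k, a - ε ≤ ω ((e 1)^[k] x) := by
        intro k
        by_contra hlt
        push Not at hlt
        refine hcon k ?_
        refine interior_maximal (s := {y : Ω | F y ≤ a}) (t := {y : Ω | ω y < a - ε}) ?_ ?_ hlt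
        · intro y hy
          have k1 := abs_le.1 (hFε y y.2.1)
          have hy' : ω y < a - ε := hy
          change F y ≤ a
          linarith [k1.2]
        · exact isOpen_lt (hω.comp continuous_subtype_val) continuous_const
      let u : ℕ → E := fun k => ((e 1)^[k] x : Ω)
      have hu1 : ∀ k, ‖u k‖ = 1 := fun k => ((e 1)^[k] x).2.1
      have husucc : ∀ k, u (k + 1) = st 1 (u k) := by
        intro k
        simp only [u, Function.iterate_succ_apply', e]
      have hanti : Antitone fun k => ω (u k) :=
        antitone_nat_of_succ_le fun k => by
          rw [husucc]; exact hst4 1 _ (hu1 k)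
      have hbdd : BddBelow (Set.range fun k => ω (u k)) := ⟨a - ε, by
        rintro _ ⟨k, rfl⟩; exact hge k⟩
      have hlim := tendsto_atTop_ciInf hanti hbdd
      obtain ⟨y, hy, φ, hφ, hφy⟩ := (isCompact_sphere (0 : E) 1).tendsto_subseq
        (x := u) (fun k => by simp [hu1])
      have hy1 : ‖y‖ = 1 := by simpa using hy
      have l1 : Filter.Tendsto (fun k => ω (u (φ k))) Filter.atTop (nhds (ω y)) :=
        (hω.tendsto y).comp hφy
      have hst1c : ContinuousOn (st 1) (Metric.sphere 0 1) :=
        hstc.comp (by fun_prop : ContinuousOn (fun z : E => ((1 : ℝ), z)) _) fun z hz => ⟨trivial, hz⟩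
      have l2 : Filter.Tendsto (fun k => ω (u (φ k + 1))) Filter.atTop (nhds (ω (st 1 y))) := by
        refine (hω.tendsto _).comp ?_
        simp only [husucc]
        have : Filter.Tendsto (fun k => u (φ k)) Filter.atTop (nhdsWithin y (Metric.sphere 0 1)) :=
          tendsto_nhdsWithin_iff.2 ⟨hφy, Filter.Eventually.of_forall fun k => by simp [hu1]⟩
        exact (hst1c y hy).tendsto.comp this
      have e1 := tendsto_nhds_unique l1 (hlim.comp hφ.tendsto_atTop)
      have e2 := tendsto_nhds_unique l2
        (hlim.comp ((Filter.tendsto_add_atTop_nat 1).comp hφ.tendsto_atTop))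
      have hyge : a - ε ≤ ω y := ge_of_tendsto' l1 fun k => hge _
      have hylt : ω y < 0 := by
        have : ω y ≤ ω (u 0) := by rw [e1]; exact ciInf_le hbdd 0
        exact this.trans_lt x.2.2
      have hv0 := hcrit y hy1 ⟨by linarith, hylt⟩
      have h3 := hst3 1 y hy1
      have hc1 : c 1 = η := by simp [c]
      have hpos : 0 < c 1 / 2 * ‖v y‖ ^ 2 := by
        have := norm_pos_iff.2 hv0
        rw [hc1]; positivity
      linarith
  obtain ⟨h⟩ := hmain
  let hom : {x : E | ‖x‖ = 1 ∧ F x ≤ a} ≃ₜ A :=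
    { toFun := fun x => ⟨⟨x, x.2.1, by
        have := abs_le.1 (hFε x x.2.1); linarith [x.2.2, this.1]⟩, x.2.2⟩
      invFun := fun x => ⟨x, x.1.2.1, x.2⟩
      left_inv := fun x => rfl
      right_inv := fun x => rfl
      continuous_toFun := by fun_prop
      continuous_invFun := by fun_prop }
  exact ⟨hom.toHomotopyEquiv.trans h⟩

theorem aux_poly {n : ℕ} (P : MvPolynomial (Fin n) ℝ) (x : EuclideanSpace ℝ (Fin n)) :
    HasFDerivAt (fun x : EuclideanSpace ℝ (Fin n) => MvPolynomial.eval (fun i => x i) P)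
      (∑ i, MvPolynomial.eval (fun i => x i) (MvPolynomial.pderiv i P) •
        (EuclideanSpace.proj i : EuclideanSpace ℝ (Fin n) →L[ℝ] ℝ)) x := by
  classical
  induction P using MvPolynomial.induction_on with
  | C a => simpa using hasFDerivAt_const a x
  | add p q hp hq =>
    simp only [map_add]
    refine (hp.fun_add hq).congr_fderiv ?_
    ext w
    simp [add_mul, Finset.sum_add_distrib]
  | mul_X p j hp =>
    have h1 : HasFDerivAt (fun x : EuclideanSpace ℝ (Fin n) => x j)
        (EuclideanSpace.proj j : EuclideanSpace ℝ (Fin n) →L[ℝ] ℝ) x :=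
      (EuclideanSpace.proj j : EuclideanSpace ℝ (Fin n) →L[ℝ] ℝ).hasFDerivAt
    simp only [map_mul, MvPolynomial.eval_X]
    refine (hp.fun_mul h1).congr_fderiv ?_
    ext w
    have hpr : ∀ i, (EuclideanSpace.proj i : EuclideanSpace ℝ (Fin n) →L[ℝ] ℝ) w = w i :=
      fun _ => rfl
    have hs : ∑ i, (MvPolynomial.eval (fun i => x i) p * MvPolynomial.eval (fun i => x i)
        (MvPolynomial.pderiv i (MvPolynomial.X j : MvPolynomial (Fin n) ℝ))) * w i =
        MvPolynomial.eval (fun i => x i) p * w j := by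
      rw [Finset.sum_eq_single j]
      · simp
      · intro i _ hij
        simp [MvPolynomial.pderiv_X, Pi.single_apply, hij.symm]
      · simp
    simp only [Derivation.leibniz, map_add, smul_eq_mul, map_mul, MvPolynomial.eval_X,
      add_apply, smul_apply, sum_apply, hpr, add_mul, Finset.sum_add_distrib,
      Finset.mul_sum]
    rw [hs]
    simp only [mul_assoc]

theorem aux_hom {n d : ℕ} (P : MvPolynomial (Fin n) ℝ) (hP : P.IsHomogeneous d) (r : ℝ)
    (x : Fin n → ℝ) : MvPolynomial.eval (fun i => r * x i) P = r ^ d * MvPolynomial.eval x P := by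
  rw [MvPolynomial.eval_eq, MvPolynomial.eval_eq, Finset.mul_sum]
  refine Finset.sum_congr rfl fun m hm => ?_
  have h := hP (MvPolynomial.mem_support_iff.1 hm)
  rw [Finsupp.weight_apply] at h
  simp only [mul_pow, Finset.prod_mul_distrib, Finset.prod_pow_eq_pow_sum]
  have : ∑ i ∈ m.support, m i = d := by
    rw [← h, Finsupp.sum]; simp
  rw [this]; ring

/-- Radial extension of the restriction of `ω` to the sphere. -/
noncomputable def auxW {E : Type} [NormedAddCommGroup E] [InnerProductSpace ℝ E] (ω : E → ℝ) : E → ℝ :=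
  fun z => ω (‖z‖⁻¹ • z)

theorem aux_W {E : Type} [NormedAddCommGroup E] [InnerProductSpace ℝ E]
    [FiniteDimensional ℝ E] (ω : E → ℝ) (hω : ContDiff ℝ 2 ω) :
    ContDiffOn ℝ 2 (auxW ω) {0}ᶜ ∧ (∀ x, ‖x‖ = 1 → fderiv ℝ (auxW ω) x x = 0) ∧
    (∀ x, ‖x‖ = 1 → fderiv ℝ (auxW ω) x = 0 → ∀ w, fderiv ℝ ω x w = inner ℝ x w * fderiv ℝ ω x x) := by
  have hW : ContDiffOn ℝ 2 (auxW ω) {0}ᶜ := by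
    intro z hz
    have hz' : z ≠ 0 := hz
    refine ContDiffAt.contDiffWithinAt ?_
    refine hω.contDiffAt.comp z ?_
    exact ((contDiffAt_norm ℝ hz').inv (norm_ne_zero_iff.2 hz')).smul contDiffAt_id
  have hdiff : ∀ x, ‖x‖ = 1 → HasFDerivAt (auxW ω) (fderiv ℝ (auxW ω) x) x := by
    intro x hx
    have hx0 : x ≠ 0 := by rintro rfl; simp at hx
    exact ((hW.contDiffAt (isOpen_compl_singleton.mem_nhds hx0)).differentiableAt
      (by norm_num)).hasFDerivAt
  have hline : ∀ x w : E, HasDerivAt (fun t : ℝ => x + t • w) w 0 := by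
    intro x w
    simpa using ((hasDerivAt_id (0 : ℝ)).smul_const w).const_add x
  refine ⟨hW, fun x hx => ?_, fun x hx h0 w => ?_⟩
  · have h1 : HasDerivAt (fun t : ℝ => auxW ω (x + t • x)) (fderiv ℝ (auxW ω) x x) 0 := by
      have h : HasFDerivAt (auxW ω) (fderiv ℝ (auxW ω) x) ((fun t : ℝ => x + t • x) 0) := by
        have e : (fun t : ℝ => x + t • x) 0 = x := by simp
        rw [e]; exact hdiff x hx
      have h' := h.comp_hasDerivAt (0 : ℝ) (hline x x)
      exact h'
    have h2 : HasDerivAt (fun t : ℝ => auxW ω (x + t • x)) 0 0 := by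
      refine (hasDerivAt_const (0 : ℝ) (ω x)).congr_of_eventuallyEq ?_
      filter_upwards [lt_mem_nhds (show (-1 : ℝ) < 0 by norm_num)] with t ht
      have h3 : x + t • x = (1 + t) • x := by module
      have h4 : 0 < 1 + t := by linarith
      simp only [auxW]
      rw [h3, norm_smul, hx, Real.norm_of_nonneg h4.le, mul_one, smul_smul,
        inv_mul_cancel₀ h4.ne', one_smul]
    exact h1.unique h2
  · -- work with the tangential part of w
    set y := w - (inner ℝ x w : ℝ) • x with hy
    have hxy : inner ℝ x y = 0 := by
      rw [hy, inner_sub_right, inner_smul_right, real_inner_self_eq_norm_sq, hx]; ring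
    have h1 : HasDerivAt (fun t : ℝ => auxW ω (x + t • y)) (fderiv ℝ (auxW ω) x y) 0 := by
      have h : HasFDerivAt (auxW ω) (fderiv ℝ (auxW ω) x) ((fun t : ℝ => x + t • y) 0) := by
        have e : (fun t : ℝ => x + t • y) 0 = x := by simp
        rw [e]; exact hdiff x hx
      have h' := h.comp_hasDerivAt (0 : ℝ) (hline x y)
      exact h'
    have hn : HasDerivAt (fun t : ℝ => ‖x + t • y‖⁻¹) 0 0 := by
      have e1 : (fun t : ℝ => ‖x + t • y‖⁻¹) = fun t : ℝ => (Real.sqrt (1 + t ^ 2 * ‖y‖ ^ 2))⁻¹ := by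
        funext t
        have : ‖x + t • y‖ ^ 2 = 1 + t ^ 2 * ‖y‖ ^ 2 := by
          rw [norm_add_sq_real, hx, inner_smul_right, hxy, norm_smul, mul_pow,
            Real.norm_eq_abs, sq_abs]
          ring
        rw [← this, Real.sqrt_sq (norm_nonneg _)]
      rw [e1]
      have e2 : HasDerivAt (fun t : ℝ => 1 + t ^ 2 * ‖y‖ ^ 2) 0 0 := by
        simpa using (((hasDerivAt_id (0 : ℝ)).pow 2).mul_const (‖y‖ ^ 2)).const_add 1
      exact ((e2.sqrt (by simp)).fun_inv (by simp)).congr_deriv (by simp)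
    have h2 : HasDerivAt (fun t : ℝ => ‖x + t • y‖⁻¹ • (x + t • y)) y 0 := by
      exact (hn.fun_smul (hline x y)).congr_deriv (by simp [hx])
    have h3 : HasDerivAt (fun t : ℝ => auxW ω (x + t • y)) (fderiv ℝ ω x y) 0 := by
      have h : HasFDerivAt ω (fderiv ℝ ω x) ((fun t : ℝ => ‖x + t • y‖⁻¹ • (x + t • y)) 0) := by
        have e : (fun t : ℝ => ‖x + t • y‖⁻¹ • (x + t • y)) 0 = x := by simp [hx]
        rw [e]; exact (hω.differentiable (by norm_num) x).hasFDerivAt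
      exact h.comp_hasDerivAt (0 : ℝ) h2
    have h4 := h1.unique h3
    rw [h0] at h4
    have h5 : fderiv ℝ ω x y = 0 := by simpa using h4.symm
    rw [hy, map_sub, map_smul, smul_eq_mul] at h5
    linarith

theorem aux_scale {E : Type} [NormedAddCommGroup E] [NormedSpace ℝ E] (f F : E → ℝ) (a r b : ℝ)
    (hr : 0 < r) (hF : ∀ y, ‖y‖ = 1 → (F y ≤ a ↔ f (r • y) ≤ b)) :
    Nonempty ({x : E | ‖x‖ = r ∧ f x ≤ b} ≃ₜ {y : E | ‖y‖ = 1 ∧ F y ≤ a}) := by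
  have hn : ∀ x : E, ‖x‖ = r → ‖r⁻¹ • x‖ = 1 := by
    intro x hx
    rw [norm_smul, hx, norm_inv, Real.norm_of_nonneg hr.le, inv_mul_cancel₀ hr.ne']
  refine ⟨{ toFun := fun x => ⟨r⁻¹ • (x : E), hn _ x.2.1, ?_⟩
            invFun := fun y => ⟨r • (y : E), ?_, ?_⟩
            left_inv := ?_
            right_inv := ?_
            continuous_toFun := ?_
            continuous_invFun := ?_ }⟩
  · rw [hF _ (hn _ x.2.1), smul_inv_smul₀ hr.ne']
    exact x.2.2
  · rw [norm_smul, y.2.1, Real.norm_of_nonneg hr.le, mul_one]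
  · exact (hF _ y.2.1).1 y.2.2
  · intro x
    apply Subtype.ext
    simp [smul_inv_smul₀ hr.ne']
  · intro x
    apply Subtype.ext
    simp [inv_smul_smul₀ hr.ne']
  · exact (continuous_subtype_val.const_smul _).subtype_mk _
  · exact (continuous_subtype_val.const_smul _).subtype_mk _

theorem aux_g {E : Type} [NormedAddCommGroup E] [NormedSpace ℝ E] (g : E → ℝ) (d : ℕ)
    (hg : AnalyticAt ℝ g 0) (hO : Asymptotics.IsBigO (nhds 0) g fun x => ‖x‖ ^ (d + 1))
    (ε : ℝ) (hε : 0 < ε) : ∃ r₀ > (0 : ℝ), ∀ r ∈ Set.Ioc (0 : ℝ) r₀, ∀ x y : E, ‖x‖ = 1 → ‖y‖ = 1 →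
      |g (r • x) / r ^ d| ≤ ε ∧ |g (r • x) / r ^ d - g (r • y) / r ^ d| ≤ ε * ‖x - y‖ := by
  obtain ⟨C, hC0, hC⟩ := hO.exists_pos
  obtain ⟨D, hD0, hD⟩ := (aux_bigO g d hg hO).exists_pos
  have han := hg.eventually_analyticAt
  obtain ⟨ρ, hρ, hball⟩ := Metric.eventually_nhds_iff.1 ((hC.bound.and hD.bound).and han)
  refine ⟨min (ρ / 2) (min (ε / C) (ε / D)), by positivity, fun r hr x y hx hy => ?_⟩
  have hr0 : 0 < r := hr.1
  have h1 : r ≤ ρ / 2 := hr.2.trans (min_le_left _ _)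
  have h2 : r ≤ ε / C := hr.2.trans ((min_le_right _ _).trans (min_le_left _ _))
  have h3 : r ≤ ε / D := hr.2.trans ((min_le_right _ _).trans (min_le_right _ _))
  rw [le_div_iff₀ hC0] at h2
  rw [le_div_iff₀ hD0] at h3
  have hrd : 0 < r ^ d := pow_pos hr0 d
  have hnorm : ∀ z : E, ‖z‖ = 1 → ‖r • z‖ = r := by
    intro z hz
    rw [norm_smul, hz, Real.norm_of_nonneg hr0.le, mul_one]
  have hin : ∀ z ∈ Metric.closedBall (0 : E) r, dist z 0 < ρ := by
    intro z hz
    have := Metric.mem_closedBall.1 hz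
    linarith
  constructor
  · have h := (hball (hin (r • x) (by simp [hnorm x hx]))).1.1
    rw [hnorm x hx, Real.norm_eq_abs, Real.norm_of_nonneg (by positivity)] at h
    rw [abs_div, abs_of_pos hrd, div_le_iff₀ hrd]
    calc _ ≤ C * r ^ (d + 1) := h
      _ = (r * C) * r ^ d := by ring
      _ ≤ _ := by gcongr
  · have hmv : ‖g (r • x) - g (r • y)‖ ≤ D * r ^ d * ‖r • x - r • y‖ := by
      refine (convex_closedBall (0 : E) r).norm_image_sub_le_of_norm_fderiv_le (𝕜 := ℝ)
        (fun z hz => (hball (hin z hz)).2.differentiableAt) (fun z hz => ?_)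
        (by simp [hnorm y hy]) (by simp [hnorm x hx])
      have h := (hball (hin z hz)).1.2
      refine h.trans ?_
      rw [Real.norm_of_nonneg (by positivity)]
      have : ‖z‖ ≤ r := by simpa using hz
      gcongr
    rw [← smul_sub, norm_smul, Real.norm_eq_abs, Real.norm_of_nonneg hr0.le] at hmv
    rw [← sub_div, abs_div, abs_of_pos hrd, div_le_iff₀ hrd]
    calc _ ≤ _ := hmv
      _ = (r * D) * ‖x - y‖ * r ^ d := by ring
      _ ≤ _ := by gcongr

theorem aux_roots (Q : Polynomial ℝ) (hQ : Q ≠ 0) :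
    ∃ a₀ < (0 : ℝ), ∀ t ∈ Set.Ioo a₀ 0, Q.eval t ≠ 0 := by
  have hfin : {t : ℝ | Q.IsRoot t ∧ t < 0}.Finite :=
    (Polynomial.finite_setOfPred_isRoot hQ).subset fun t ht => ht.1
  have h : ∀ᶠ a in nhds (0 : ℝ), a ∉ {t : ℝ | Q.IsRoot t ∧ t < 0} :=
    hfin.isClosed.isOpen_compl.mem_nhds (by simp)
  obtain ⟨ρ, hρ, hb⟩ := Metric.eventually_nhds_iff.1 h
  refine ⟨-ρ, by linarith, fun t ht h0 => ?_⟩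
  refine hb (y := t) ?_ ⟨h0, ht.2⟩
  rw [Real.dist_eq, sub_zero, abs_of_neg ht.2]
  linarith [ht.1]


open Metric Set Asymptotics

/-- For `f` analytic near the origin with `f 0 = 0` and initial form `ω`,
a nonzero homogeneous polynomial of degree `d` (so that `f - ω = O(‖x‖^(d+1))` at `0`),
and `Ω = {x : ‖x‖ = 1, ω x < 0}`, there is `a₀ < 0` such that for every `a ∈ (a₀, 0)`
there is `r₀ > 0` such that for every `r ∈ (0, r₀]` the three sets
`{‖x‖ = r, f x ≤ a r^d}`, `{‖x‖ = r, ω x ≤ a r^d}` and `Ω` are pairwise homotopy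
equivalent. -/
theorem statement1 (n d : ℕ) (f ω : EuclideanSpace ℝ (Fin n) → ℝ)
    (U : Set (EuclideanSpace ℝ (Fin n))) (hU : IsOpen U)
    (h0U : (0 : EuclideanSpace ℝ (Fin n)) ∈ U)
    (hf : AnalyticOnNhd ℝ f U) (hf0 : f 0 = 0)
    (P : MvPolynomial (Fin n) ℝ) (hP0 : P ≠ 0) (hPhom : P.IsHomogeneous d)
    (hωP : ∀ x : EuclideanSpace ℝ (Fin n), ω x = MvPolynomial.eval (fun i => x i) P)
    (hg : (fun x : EuclideanSpace ℝ (Fin n) => f x - ω x) =O[nhds 0]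
      fun x : EuclideanSpace ℝ (Fin n) => ‖x‖ ^ (d + 1)) :
    ∃ a₀ < (0 : ℝ), ∀ a ∈ Ioo a₀ (0 : ℝ), ∃ r₀ > (0 : ℝ), ∀ r ∈ Ioc (0 : ℝ) r₀,
      Nonempty (ContinuousMap.HomotopyEquiv
        ↥{x : EuclideanSpace ℝ (Fin n) | ‖x‖ = r ∧ f x ≤ a * r ^ d}
        ↥{x : EuclideanSpace ℝ (Fin n) | ‖x‖ = r ∧ ω x ≤ a * r ^ d}) ∧
      Nonempty (ContinuousMap.HomotopyEquiv
        ↥{x : EuclideanSpace ℝ (Fin n) | ‖x‖ = r ∧ ω x ≤ a * r ^ d}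
        ↥{x : EuclideanSpace ℝ (Fin n) | ‖x‖ = 1 ∧ ω x < 0}) ∧
      Nonempty (ContinuousMap.HomotopyEquiv
        ↥{x : EuclideanSpace ℝ (Fin n) | ‖x‖ = r ∧ f x ≤ a * r ^ d}
        ↥{x : EuclideanSpace ℝ (Fin n) | ‖x‖ = 1 ∧ ω x < 0}) := by
  have hωeq : ω = fun x : EuclideanSpace ℝ (Fin n) => MvPolynomial.eval (fun i => x i) P :=
    funext hωP
  have hωan : AnalyticOnNhd ℝ ω Set.univ := by
    rw [hωeq]
    exact AnalyticOnNhd.eval_continuousLinearMap'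
      (fun i => (EuclideanSpace.proj i : EuclideanSpace ℝ (Fin n) →L[ℝ] ℝ)) P
  have hω2 : ContDiff ℝ 2 ω := contDiff_iff_contDiffAt.2 fun x => (hωan x trivial).contDiffAt
  have hhom : ∀ (r : ℝ) (x : EuclideanSpace ℝ (Fin n)), ω (r • x) = r ^ d * ω x := by
    intro r x
    rw [hωP, hωP]
    exact aux_hom P hPhom r (fun i => x i)
  obtain ⟨hW, hWorth, hWcrit⟩ := aux_W ω hω2
  have hWω : ∀ x : EuclideanSpace ℝ (Fin n), ‖x‖ = 1 → auxW ω x = ω x := by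
    intro x hx
    simp [auxW, hx]
  obtain ⟨v, hvdef⟩ : ∃ v : EuclideanSpace ℝ (Fin n) → EuclideanSpace ℝ (Fin n),
      v = fun x => (InnerProductSpace.toDual ℝ _).symm (fderiv ℝ (auxW ω) x) := ⟨_, rfl⟩
  have hv : ∀ x w, fderiv ℝ (auxW ω) x w = inner ℝ (v x) w := by
    intro x w
    rw [hvdef, InnerProductSpace.toDual_symm_apply]
  have hvc : ContinuousOn v (Metric.sphere 0 1) := by
    rw [hvdef]
    refine (InnerProductSpace.toDual ℝ (EuclideanSpace ℝ (Fin n))).symm.continuous.comp_continuousOn ?_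
    refine (hW.continuousOn_fderiv_of_isOpen isOpen_compl_singleton (by norm_num)).mono ?_
    intro x hx h0
    have h0' : x = 0 := h0
    rw [h0'] at hx
    simp at hx
  have horth : ∀ x, ‖x‖ = 1 → inner ℝ (v x) x = 0 := by
    intro x hx
    rw [← hv, hWorth x hx]
  obtain ⟨η, hη, hdesc⟩ := aux_descent (auxW ω) hW v hv hvc horth
  obtain ⟨Q, hQ0, hQ⟩ := aux_crit P
  obtain ⟨a₀, ha₀, hroots⟩ := aux_roots Q hQ0
  have hcrit : ∀ x, ‖x‖ = 1 → ω x ∈ Set.Ioo a₀ 0 → v x ≠ 0 := by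
    intro x hx hωx hv0
    refine hroots _ hωx ?_
    rw [hωP]
    refine hQ (fun i => x i) ?_ ⟨fderiv ℝ ω x x, fun i => ?_⟩
    · rw [← EuclideanSpace.real_norm_sq_eq, hx]; norm_num
    · have hz : fderiv ℝ (auxW ω) x = 0 := by
        ext w
        rw [hv, hv0, inner_zero_left]; rfl
      have h1 := hWcrit x hx hz (EuclideanSpace.single i 1)
      have h2 : fderiv ℝ ω x (EuclideanSpace.single i 1) =
          MvPolynomial.eval (fun i => x i) (MvPolynomial.pderiv i P) := by
        have h3 := aux_poly P x
        rw [← hωeq] at h3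
        rw [h3.fderiv, sum_apply, Finset.sum_eq_single i]
        · simp
        · intro j _ hj
          simp [hj]
        · simp
      rw [h2] at h1
      rw [h1, mul_comm]
      simp [EuclideanSpace.inner_single_right]
  have hdesc' : ∀ x, ‖x‖ = 1 → ∀ s ∈ Set.Icc 0 η,
      ω (‖x - s • v x‖⁻¹ • (x - s • v x)) ≤ ω x - s / 2 * ‖v x‖ ^ 2 := by
    intro x hx s hs
    have h := hdesc x hx s hs
    rw [hWω x hx] at h
    exact h
  refine ⟨a₀, ha₀, fun a ha => ?_⟩
  obtain ⟨ε, hε, hmain⟩ := aux_main ω hω2.continuous v hvc horth η hη hdesc' a₀ hcrit a ha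
  have hgan : AnalyticAt ℝ (fun x => f x - ω x) 0 := (hf 0 h0U).fun_sub (hωan 0 trivial)
  obtain ⟨r₀, hr₀, hsmall⟩ := aux_g (fun x => f x - ω x) d hgan hg ε hε
  refine ⟨r₀, hr₀, fun r hr => ?_⟩
  have hrd : 0 < r ^ d := pow_pos hr.1 d
  have hrel : ∀ x, f (r • x) / r ^ d - ω x = (f (r • x) - ω (r • x)) / r ^ d := by
    intro x
    rw [hhom]
    field_simp
  obtain ⟨Ef⟩ := hmain (fun x => f (r • x) / r ^ d)
    (fun x hx => by
      simp only [hrel]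
      exact (hsmall r hr x x hx hx).1)
    (fun x y hx hy => by
      simp only [hrel]
      exact (hsmall r hr x y hx hy).2)
  obtain ⟨Eω⟩ := hmain ω (fun x hx => by simpa using hε.le)
    (fun x y hx hy => by
      simp only [sub_self, abs_zero]
      positivity)
  obtain ⟨Hf⟩ := aux_scale f (fun x => f (r • x) / r ^ d) a r (a * r ^ d) hr.1
    (fun y hy => by rw [div_le_iff₀ hrd])
  obtain ⟨Hω⟩ := aux_scale ω ω a r (a * r ^ d) hr.1
    (fun y hy => by rw [hhom, mul_comm, mul_le_mul_iff_left₀ hrd])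
  have Kf := Hf.toHomotopyEquiv.trans Ef
  have Kω := Hω.toHomotopyEquiv.trans Eω
  exact ⟨⟨Kf.trans Kω.symm⟩, ⟨Kω⟩, ⟨Kf⟩⟩
end

section
/- Let ω : ℝ^n → ℝ be a nonzero homogeneous polynomial. Then there exists a₀ < 0 such that for every a ∈ (a₀, 0), the inclusion of {x ∈ ℝ^n : |x| = 1, ω(x) ≤ a} into Ω = {x ∈ ℝ^n : |x| = 1, ω(x) < 0} is a homotopy equivalence; in particular these two subspaces of the unit sphere have the same homotopy type. -/
open Metric Set

section Alg
open KaehlerDifferential TensorProduct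

lemma isAlgebraic_of_D_eq_zero {k K : Type} [Field k] [CharZero k] [Field K] [Algebra k K]
    (w : K) (hw : D k K w = 0) : IsAlgebraic k w := by
  by_contra htr
  have hind : AlgebraicIndepOn k id ({w} : Set K) := by
    have : AlgebraicIndependent k (fun _ : ({w} : Set K) => w) := by
      rw [algebraicIndependent_unique_type_iff]
      exact htr
    convert this using 1
    funext x
    exact x.2
  obtain ⟨s, hs, hB⟩ := exists_isTranscendenceBasis_superset hind
  let A := MvPolynomial s k
  let f : A →ₐ[k] K := MvPolynomial.aeval (fun i : s => (i : K))
  let : Algebra A K := f.toRingHom.toAlgebra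
  have : IsScalarTower k A K := IsScalarTower.of_algebraMap_eq fun r => (f.commutes r).symm
  have hinj : Function.Injective (algebraMap A K) := hB.1
  have : FaithfulSMul A K := (faithfulSMul_iff_algebraMap_injective A K).2 hinj
  let : Algebra (FractionRing A) K := FractionRing.liftAlgebra A K
  have : IsScalarTower A (FractionRing A) K := FractionRing.isScalarTower_liftAlgebra A K
  have : CharZero (FractionRing A) :=
    charZero_of_injective_algebraMap
      (IsFractionRing.injective A (FractionRing A))
  have : Algebra.IsAlgebraic A K := by
    have := hB.isAlgebraic
    exact Algebra.IsAlgebraic.of_ringHom_of_comp_eq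
      (hB.1.aevalEquiv : A →+* Algebra.adjoin k (Set.range ((↑) : s → K))) (RingHom.id K)
      hB.1.aevalEquiv.surjective Function.injective_id (by ext <;> rfl)
  have : Algebra.IsAlgebraic (FractionRing A) K :=
    Algebra.IsAlgebraic.extendScalars (R := A) (IsFractionRing.injective A (FractionRing A))
  have : Algebra.FormallyEtale (FractionRing A) K := Algebra.FormallyEtale.of_isSeparable _ _
  have : Algebra.FormallyEtale A (FractionRing A) :=
    Algebra.FormallyEtale.of_isLocalization (nonZeroDivisors A)
  have : Algebra.FormallyEtale A K := Algebra.FormallyEtale.comp A (FractionRing A) K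
  let i : s := ⟨w, hs rfl⟩
  have h1 := tensorKaehlerEquivOfFormallyEtale_symm_D_algebraMap k A K (MvPolynomial.X i)
  have h2 : algebraMap A K (MvPolynomial.X i) = w := by
    change f _ = _
    exact MvPolynomial.aeval_X _ i
  rw [h2, hw, map_zero] at h1
  have h3 := ((mvPolynomialBasis k s).baseChange K).ne_zero i
  apply h3
  rw [Module.Basis.baseChange_apply]
  rw [h1, mvPolynomialBasis_apply]

lemma D_eq_sum {n : ℕ} {K : Type} [Field K] [Algebra ℝ K] (g : MvPolynomial (Fin n) ℝ →ₐ[ℝ] K)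
    (P : MvPolynomial (Fin n) ℝ) :
    D ℝ K (g P) = ∑ i, g (MvPolynomial.pderiv i P) • D ℝ K (g (MvPolynomial.X i)) := by
  induction P using MvPolynomial.induction_on with
  | C a =>
    have : g (MvPolynomial.C a) = algebraMap ℝ K a := g.commutes a
    simp [this]
  | add p q hp hq => simp [hp, hq, add_smul, Finset.sum_add_distrib]
  | mul_X p i hp =>
    simp only [map_mul, Derivation.leibniz, hp, MvPolynomial.pderiv_X, map_add, smul_eq_mul,
      add_smul, Finset.sum_add_distrib, Finset.smul_sum, smul_smul]
    congr 1
    rw [Finset.sum_eq_single i]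
    · simp
    · intro j _ hj
      simp [hj.symm]
    · simp

lemma isAlgebraic_of_critical {n : ℕ} {K : Type} [Field K] [Algebra ℝ K]
    (g : MvPolynomial (Fin n) ℝ →ₐ[ℝ] K)
    (P : MvPolynomial (Fin n) ℝ)
    (h1 : ∑ i, g (MvPolynomial.X i) ^ 2 = 1) (l : K)
    (h2 : ∀ i, g (MvPolynomial.pderiv i P) = l * g (MvPolynomial.X i)) :
    IsAlgebraic ℝ (g P) := by
  have e1 : ∑ i, g (MvPolynomial.X i) • D ℝ K (g (MvPolynomial.X i)) = 0 := by
    have h := congrArg (D ℝ K) h1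
    rw [Derivation.map_one_eq_zero] at h
    simp only [map_sum, Derivation.leibniz_pow] at h
    simp only [Nat.add_one_sub_one, pow_one, ← Finset.smul_sum] at h
    rw [← Nat.cast_smul_eq_nsmul K] at h
    have : CharZero K := charZero_of_injective_algebraMap (algebraMap ℝ K).injective
    exact (smul_eq_zero.1 h).resolve_left (by norm_num)
  apply isAlgebraic_of_D_eq_zero
  rw [D_eq_sum, ← smul_zero l, ← e1, Finset.smul_sum]
  refine Finset.sum_congr rfl fun i _ => ?_
  rw [smul_smul, h2]

lemma exists_poly_mem_prime {n : ℕ} (P : MvPolynomial (Fin n) ℝ)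
    (p : Ideal (MvPolynomial (Fin n) ℝ)) [p.IsPrime]
    (h1 : (∑ i, MvPolynomial.X i ^ 2 - 1 : MvPolynomial (Fin n) ℝ) ∈ p)
    (h2 : ∀ i, MvPolynomial.pderiv i P -
      (∑ j, MvPolynomial.X j * MvPolynomial.pderiv j P) * MvPolynomial.X i ∈ p) :
    ∃ q : Polynomial ℝ, q ≠ 0 ∧ Polynomial.aeval P q ∈ p := by
  let g : MvPolynomial (Fin n) ℝ →ₐ[ℝ] FractionRing (MvPolynomial (Fin n) ℝ ⧸ p) :=
    (IsScalarTower.toAlgHom ℝ (MvPolynomial (Fin n) ℝ ⧸ p) _).comp (Ideal.Quotient.mkₐ ℝ p)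
  have hker : ∀ r, g r = 0 ↔ r ∈ p := by
    intro r
    rw [← Ideal.Quotient.eq_zero_iff_mem]
    exact FaithfulSMul.algebraMap_eq_zero_iff (MvPolynomial (Fin n) ℝ ⧸ p)
      (FractionRing (MvPolynomial (Fin n) ℝ ⧸ p))
  obtain ⟨q, hq, hq0⟩ := isAlgebraic_of_critical g P
    (by simpa [sub_eq_zero] using (hker _).2 h1) _
    (fun i => by
      have := (hker _).2 (h2 i)
      rwa [map_sub, sub_eq_zero, map_mul] at this)
  refine ⟨q, hq, (hker _).1 ?_⟩
  rw [← hq0, Polynomial.aeval_algHom_apply]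

lemma finite_critical {n : ℕ} (P : MvPolynomial (Fin n) ℝ) :
    Set.Finite {c : ℝ | ∃ x : Fin n → ℝ, ∑ i, x i ^ 2 = 1 ∧
      (∀ i, MvPolynomial.eval x (MvPolynomial.pderiv i P) =
        (∑ j, x j * MvPolynomial.eval x (MvPolynomial.pderiv j P)) * x i) ∧
      MvPolynomial.eval x P = c} := by
  let J : Ideal (MvPolynomial (Fin n) ℝ) := Ideal.span (insert (∑ i, MvPolynomial.X i ^ 2 - 1 : MvPolynomial (Fin n) ℝ)
    (Set.range fun i => MvPolynomial.pderiv i P -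
      (∑ j, MvPolynomial.X j * MvPolynomial.pderiv j P) * MvPolynomial.X i))
  have hfin : J.minimalPrimes.Finite := Ideal.finite_minimalPrimes_of_isNoetherianRing _ J
  have hex : ∀ p : Ideal (MvPolynomial (Fin n) ℝ), ∃ q : Polynomial ℝ, q ≠ 0 ∧
      (p ∈ J.minimalPrimes → Polynomial.aeval P q ∈ p) := by
    intro p
    by_cases hp : p ∈ J.minimalPrimes
    · have := hp.1.1
      have hle : J ≤ p := hp.1.2
      obtain ⟨q, hq, h⟩ := exists_poly_mem_prime P p
        (hle (Ideal.subset_span (Set.mem_insert _ _)))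
        (fun i => hle (Ideal.subset_span (Set.mem_insert_of_mem _ ⟨i, rfl⟩)))
      exact ⟨q, hq, fun _ => h⟩
    · exact ⟨1, one_ne_zero, fun h => absurd h hp⟩
  choose q hq0 hq using hex
  refine (hfin.biUnion (fun p _ => (q p).roots.toFinset.finite_toSet)).subset ?_
  rintro c ⟨x, hx1, hx2, rfl⟩
  have hJ : J ≤ RingHom.ker (MvPolynomial.eval x) := by
    rw [Ideal.span_le]
    rintro r (rfl | ⟨i, rfl⟩)
    · simp [RingHom.mem_ker, hx1]
    · simp [RingHom.mem_ker, hx2 i]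
  have : (RingHom.ker (MvPolynomial.eval x)).IsPrime := RingHom.ker_isPrime _
  obtain ⟨p, hp, hle⟩ := Ideal.exists_minimalPrimes_le hJ
  simp only [Set.mem_iUnion]
  refine ⟨p, hp, ?_⟩
  have h := hle (hq p hp)
  rw [RingHom.mem_ker] at h
  simp only [Finset.mem_coe, Multiset.mem_toFinset, Polynomial.mem_roots (hq0 p),
    Polynomial.IsRoot.def]
  rw [Polynomial.aeval_def, Polynomial.hom_eval₂] at h
  rw [← h, ← Polynomial.eval₂_id]
  congr 1
  ext r
  simp

end Alg

lemma exists_lip {E : Type} [NormedAddCommGroup E] [InnerProductSpace ℝ E] [FiniteDimensional ℝ E]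
    {X : E → E} (hX : ContDiff ℝ 1 X) (R : ℝ) :
    ∃ K, LipschitzOnWith K X (closedBall 0 R) := by
  have : ProperSpace E := FiniteDimensional.proper ℝ E
  refine LocallyLipschitzOn.exists_lipschitzOnWith_of_compact (isCompact_closedBall 0 R) ?_
  exact (hX.locallyLipschitz).locallyLipschitzOn

lemma exists_flow {E : Type} [NormedAddCommGroup E] [InnerProductSpace ℝ E]
    [FiniteDimensional ℝ E]
    {X : E → E} (hX : ContDiff ℝ 1 X) (hb : ∀ x, ‖X x‖ ≤ 1) :
    ∃ φ : E × ℝ → E, ContinuousOn φ (closedBall 0 1 ×ˢ Ici 0) ∧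
      ∀ x ∈ closedBall (0 : E) 1, φ (x, 0) = x ∧
        ∀ t ∈ Ici (0 : ℝ), HasDerivWithinAt (fun s => φ (x, s)) (X (φ (x, t))) (Ici 0) t := by
  have : ProperSpace E := FiniteDimensional.proper ℝ E
  have : CompleteSpace E := FiniteDimensional.complete ℝ E
  have hex : ∀ N : ℕ, ∃ α : E × ℝ → E, (∀ x ∈ closedBall (0 : E) 1, α (x, 0) = x ∧
      ∀ t ∈ Icc (0 : ℝ) (N + 1), HasDerivWithinAt (fun s => α (x, s)) (X (α (x, t)))
        (Icc 0 (N + 1 : ℝ)) t) ∧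
      ContinuousOn α (closedBall 0 1 ×ˢ Icc (0 : ℝ) (N + 1)) := by
    intro N
    obtain ⟨K, hK⟩ := exists_lip hX (N + 2)
    have hPL : IsPicardLindelof (fun _ => X) (tmin := 0) (tmax := N + 1)
        ⟨0, by constructor <;> positivity⟩ (0 : E) (N + 2 : NNReal) 1 1 K := by
      refine IsPicardLindelof.of_time_independent (fun x _ => by simpa using hb x) ?_ ?_
      · simpa using hK
      · have : (0 : ℝ) ≤ N + 1 := by positivity
        simp [max_eq_left this]
        linarith
    exact hPL.exists_forall_mem_closedBall_eq_hasDerivWithinAt_continuousOn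
  choose α hα hαc using hex
  have hcx : ∀ (N : ℕ) (x : E) (hx : x ∈ closedBall (0 : E) 1),
      ContinuousOn (fun s => α N (x, s)) (Icc (0 : ℝ) (N + 1)) := fun N x hx t ht =>
    (((hα N x hx).2 t ht).continuousWithinAt)
  have huniq : ∀ (N M : ℕ), N ≤ M → ∀ x ∈ closedBall (0 : E) 1, ∀ t ∈ Icc (0 : ℝ) (N + 1),
      α N (x, t) = α M (x, t) := by
    intro N M hNM x hx
    have hNM' : (N : ℝ) ≤ M := by exact_mod_cast hNM
    have hsub : Icc (0 : ℝ) (N + 1) ⊆ Icc (0 : ℝ) (M + 1) := Icc_subset_Icc_right (by linarith)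
    have hbd := ((isCompact_Icc.image_of_continuousOn (hcx N x hx)).isBounded).union
      ((isCompact_Icc.image_of_continuousOn (hcx M x hx)).isBounded)
    obtain ⟨R, hR⟩ := hbd.subset_closedBall 0
    obtain ⟨K, hK⟩ := exists_lip hX R
    have hder : ∀ (L : ℕ), N ≤ L → ∀ t ∈ Ico (0 : ℝ) (N + 1),
        HasDerivWithinAt (fun s => α L (x, s)) (X (α L (x, t))) (Ici t) t := by
      intro L hL t ht
      have hL' : (N : ℝ) ≤ L := by exact_mod_cast hL
      refine ((hα L x hx).2 t ⟨ht.1, by linarith [ht.2]⟩).mono_of_mem_nhdsWithin ?_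
      exact Filter.mem_of_superset (Icc_mem_nhdsGE (show t < (L : ℝ) + 1 by linarith [ht.2]))
        (Icc_subset_Icc_left ht.1)
    exact ODE_solution_unique_of_mem_Icc_right (v := fun _ => X) (s := fun _ => closedBall 0 R)
      (fun _ _ => hK) (hcx N x hx) (hder N le_rfl)
      (fun t ht => hR (Or.inl ⟨t, ⟨ht.1, ht.2.le⟩, rfl⟩))
      ((hcx M x hx).mono hsub) (hder M hNM)
      (fun t ht => hR (Or.inr ⟨t, hsub ⟨ht.1, ht.2.le⟩, rfl⟩))
      (by rw [(hα N x hx).1, (hα M x hx).1])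
  have hφ : ∀ (N : ℕ), ∀ x ∈ closedBall (0 : E) 1, ∀ t : ℝ, 0 ≤ t → t < N + 1 →
      α ⌊t⌋₊ (x, t) = α N (x, t) := by
    intro N x hx t ht htN
    refine huniq _ _ ?_ x hx t ⟨ht, (Nat.lt_floor_add_one t).le⟩
    have : ⌊t⌋₊ < N + 1 := (Nat.floor_lt ht).2 (by exact_mod_cast htN)
    omega
  refine ⟨fun z => α ⌊z.2⌋₊ z, ?_, ?_⟩
  · rintro ⟨x, t⟩ ⟨hx, ht⟩
    simp only [mem_Ici] at ht
    set N := ⌊t⌋₊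
    have htN : t < N + 1 := Nat.lt_floor_add_one t
    have h1 : (univ ×ˢ Iio ((N : ℝ) + 1) : Set (E × ℝ)) ∈ nhds (x, t) :=
      prod_mem_nhds Filter.univ_mem (Iio_mem_nhds htN)
    have h2 := hαc N (x, t) ⟨hx, ht, htN.le⟩
    rw [← continuousWithinAt_inter h1]
    refine (h2.mono ?_).congr ?_ ?_
    · rintro ⟨y, s⟩ ⟨⟨hy, hs⟩, -, hs'⟩
      exact ⟨hy, hs, le_of_lt hs'⟩
    · rintro ⟨y, s⟩ ⟨⟨hy, hs⟩, -, hs'⟩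
      exact hφ N y hy s hs hs'
    · rfl
  · intro x hx
    refine ⟨by simpa using (hα 0 x hx).1, fun t ht => ?_⟩
    simp only [mem_Ici] at ht
    set N := ⌊t⌋₊ with hN
    have htN : t < N + 1 := Nat.lt_floor_add_one t
    have h2 := (hα N x hx).2 t ⟨ht, htN.le⟩
    simp only [← hN]
    rw [← hasDerivWithinAt_inter (Iio_mem_nhds htN)]
    refine (h2.mono ?_).congr ?_ ?_
    · rintro s ⟨hs, hs'⟩
      exact ⟨hs, le_of_lt hs'⟩
    · rintro s ⟨hs, hs'⟩
      exact hφ N x hx s hs hs'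
    · rfl

lemma exists_homotopyEquiv {E : Type} [NormedAddCommGroup E] [InnerProductSpace ℝ E]
    (S : Set E) (ω : E → ℝ) (φ : E × ℝ → E) (hω : Continuous ω)
    (hφc : ContinuousOn φ (S ×ˢ Ici 0)) (hφS : ∀ x ∈ S, ∀ t ∈ Ici (0 : ℝ), φ (x, t) ∈ S)
    (hφ0 : ∀ x ∈ S, φ (x, 0) = x)
    (hanti : ∀ x ∈ S, AntitoneOn (fun t => ω (φ (x, t))) (Ici 0))
    (a : ℝ) (ha : a < 0)
    (hreach : ∀ x ∈ S, ω x < 0 → ∃ t ∈ Ici (0 : ℝ), ω (φ (x, t)) < a) :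
    ∃ h : ContinuousMap.HomotopyEquiv ↥{x : E | x ∈ S ∧ ω x ≤ a} ↥{x : E | x ∈ S ∧ ω x < 0},
      ∀ x : ↥{x : E | x ∈ S ∧ ω x ≤ a}, ((h.toFun x : E) = (x : E)) := by
  have hdec : ∀ x ∈ S, ∀ t ∈ Ici (0 : ℝ), ω (φ (x, t)) ≤ ω x := by
    intro x hx t ht
    have := hanti x hx (mem_Ici.2 le_rfl) ht ht
    simpa [hφ0 x hx] using this
  obtain ⟨T, hT⟩ : ∃ T : C(↥{x : E | x ∈ S ∧ ω x < 0}, ℝ), ∀ x, T x ∈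
      {t : ℝ | t ∈ Ici (0 : ℝ) ∧ ω (φ (x.1, t)) ≤ a} := by
    apply exists_continuous_forall_mem_convex_of_local_const
    · rintro ⟨x, hx⟩
      apply OrdConnected.convex
      refine ⟨fun s hs u hu v hv => ⟨le_trans hs.1 hv.1, ?_⟩⟩
      exact (hanti x hx.1 hs.1 (le_trans hs.1 hv.1) hv.1).trans hs.2
    · rintro ⟨x, hx⟩
      obtain ⟨t, ht, hta⟩ := hreach x hx.1 hx.2
      refine ⟨t, ?_⟩
      have hc : Continuous fun y : ↥{x : E | x ∈ S ∧ ω x < 0} => ω (φ (y.1, t)) := by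
        apply hω.comp
        exact hφc.comp_continuous (by fun_prop) (fun y => ⟨y.2.1, ht⟩)
      filter_upwards [hc.continuousAt.eventually_lt (continuousAt_const (y := a)) hta] with y hy
      exact ⟨ht, hy.le⟩
  let i : C(↥{x : E | x ∈ S ∧ ω x ≤ a}, ↥{x : E | x ∈ S ∧ ω x < 0}) :=
    ⟨fun x => ⟨x.1, x.2.1, lt_of_le_of_lt x.2.2 ha⟩, by fun_prop⟩
  let r : C(↥{x : E | x ∈ S ∧ ω x < 0}, ↥{x : E | x ∈ S ∧ ω x ≤ a}) :=
    ⟨fun x => ⟨φ (x.1, T x), hφS _ x.2.1 _ (hT x).1, (hT x).2⟩, by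
      apply Continuous.subtype_mk
      exact hφc.comp_continuous (by fun_prop) (fun y => ⟨y.2.1, (hT y).1⟩)⟩
  have hpos : ∀ (s : unitInterval) (x : ↥{x : E | x ∈ S ∧ ω x < 0}),
      (s : ℝ) * T x ∈ Ici (0 : ℝ) := fun s x => mul_nonneg s.2.1 (hT x).1
  have H1 : (ContinuousMap.id _).Homotopic (r.comp i) := by
    refine ⟨⟨⟨fun z => ⟨φ (z.2.1, (z.1 : ℝ) * T (i z.2)), hφS _ z.2.2.1 _ (hpos _ _),
      (hdec _ z.2.2.1 _ (hpos _ _)).trans z.2.2.2⟩, ?_⟩, ?_, ?_⟩⟩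
    · apply Continuous.subtype_mk
      exact hφc.comp_continuous (by fun_prop) (fun z => ⟨z.2.2.1, hpos _ _⟩)
    · intro x
      apply Subtype.ext
      simp [hφ0 _ x.2.1]
    · intro x
      apply Subtype.ext
      simp [r, i]
  have H2 : (ContinuousMap.id _).Homotopic (i.comp r) := by
    refine ⟨⟨⟨fun z => ⟨φ (z.2.1, (z.1 : ℝ) * T z.2), hφS _ z.2.2.1 _ (hpos _ _),
      (hdec _ z.2.2.1 _ (hpos _ _)).trans_lt z.2.2.2⟩, ?_⟩, ?_, ?_⟩⟩
    · apply Continuous.subtype_mk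
      exact hφc.comp_continuous (by fun_prop) (fun z => ⟨z.2.2.1, hpos _ _⟩)
    · intro x
      apply Subtype.ext
      simp [hφ0 _ x.2.1]
    · intro x
      apply Subtype.ext
      simp [r, i]
  exact ⟨⟨i, r, H1.symm, H2.symm⟩, fun x => rfl⟩

lemma hasDerivWithinAt_eval {n : ℕ} (P : MvPolynomial (Fin n) ℝ)
    {γ : ℝ → EuclideanSpace ℝ (Fin n)} {v : EuclideanSpace ℝ (Fin n)} {s : Set ℝ} {t : ℝ}
    (h : HasDerivWithinAt γ v s t) :
    HasDerivWithinAt (fun u => MvPolynomial.eval (fun i => γ u i) P)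
      (∑ i, MvPolynomial.eval (fun i => γ t i) (MvPolynomial.pderiv i P) * v i) s t := by
  have hi : ∀ i, HasDerivWithinAt (fun u => γ u i) (v i) s t := by
    intro i
    exact ((EuclideanSpace.proj (𝕜 := ℝ) i).hasFDerivAt (x := γ t)).comp_hasDerivWithinAt t h
  induction P using MvPolynomial.induction_on with
  | C a => simpa using hasDerivWithinAt_const t s a
  | add p q hp hq =>
    convert! hp.add hq using 1
    · funext u; simp
    · simp [add_mul, Finset.sum_add_distrib]
  | mul_X p i hp =>
    convert! hp.mul (hi i) using 1
    · funext u; simp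
    · simp only [Derivation.leibniz, MvPolynomial.pderiv_X, map_add, smul_eq_mul, map_mul,
        MvPolynomial.eval_X, add_mul, Finset.sum_add_distrib]
      rw [add_comm]
      congr 1
      · rw [Finset.sum_mul]
        exact Finset.sum_congr rfl fun j _ => by ring
      · rw [Finset.sum_eq_single i]
        · simp
        · intro j _ hj
          simp [hj.symm]
        · simp

lemma contDiff_eval {n : ℕ} (P : MvPolynomial (Fin n) ℝ) :
    ContDiff ℝ 1 (fun x : EuclideanSpace ℝ (Fin n) => MvPolynomial.eval (fun i => x i) P) := by
  induction P using MvPolynomial.induction_on with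
  | C a => simpa using contDiff_const
  | add p q hp hq => simpa using hp.add hq
  | mul_X p i hp =>
    simp only [map_mul, MvPolynomial.eval_X]
    exact hp.mul (by fun_prop)

/-- Euclidean gradient of a polynomial. -/
noncomputable def polyGrad {n : ℕ} (P : MvPolynomial (Fin n) ℝ) (x : EuclideanSpace ℝ (Fin n)) :
    EuclideanSpace ℝ (Fin n) :=
  WithLp.toLp 2 (fun i => MvPolynomial.eval (fun i => x i) (MvPolynomial.pderiv i P))

/-- Minus the (rescaled) spherical gradient. -/
noncomputable def sphGrad {n : ℕ} (P : MvPolynomial (Fin n) ℝ) (x : EuclideanSpace ℝ (Fin n)) :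
    EuclideanSpace ℝ (Fin n) :=
  inner ℝ (polyGrad P x) x • x - (‖x‖ ^ 2) • polyGrad P x

/-- Bounded version of `sphGrad`. -/
noncomputable def sphField {n : ℕ} (P : MvPolynomial (Fin n) ℝ) (x : EuclideanSpace ℝ (Fin n)) :
    EuclideanSpace ℝ (Fin n) :=
  (1 + ‖sphGrad P x‖ ^ 2)⁻¹ • sphGrad P x

lemma contDiff_sphGrad {n : ℕ} (P : MvPolynomial (Fin n) ℝ) : ContDiff ℝ 1 (sphGrad P) := by
  have h : ContDiff ℝ 1 (polyGrad P) := by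
    rw [contDiff_euclidean]
    intro i
    exact contDiff_eval _
  unfold sphGrad
  exact ((h.inner ℝ contDiff_id).smul contDiff_id).sub ((contDiff_norm_sq ℝ).smul h)

lemma contDiff_sphField {n : ℕ} (P : MvPolynomial (Fin n) ℝ) : ContDiff ℝ 1 (sphField P) := by
  have h := contDiff_sphGrad P
  unfold sphField
  exact ((contDiff_const.add (h.norm_sq ℝ)).inv (fun x => by positivity)).smul h

lemma norm_sphField_le {n : ℕ} (P : MvPolynomial (Fin n) ℝ) (x) : ‖sphField P x‖ ≤ 1 := by
  unfold sphField
  have h : (0 : ℝ) < 1 + ‖sphGrad P x‖ ^ 2 := by positivity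
  rw [norm_smul, norm_inv, Real.norm_of_nonneg h.le, inv_mul_le_iff₀ h]
  nlinarith [sq_nonneg (‖sphGrad P x‖ - 1), norm_nonneg (sphGrad P x)]

lemma inner_sphField {n : ℕ} (P : MvPolynomial (Fin n) ℝ) (x) :
    inner ℝ x (sphField P x) = 0 := by
  unfold sphField sphGrad
  rw [inner_smul_right, inner_sub_right, inner_smul_right, inner_smul_right,
    real_inner_self_eq_norm_sq, real_inner_comm]
  ring

lemma inner_polyGrad_sphField {n : ℕ} (P : MvPolynomial (Fin n) ℝ) (x) (hx : ‖x‖ = 1) :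
    inner ℝ (polyGrad P x) (sphField P x) =
      - ((1 + ‖sphGrad P x‖ ^ 2)⁻¹ * ‖sphGrad P x‖ ^ 2) := by
  unfold sphField
  rw [inner_smul_right, ← mul_neg]
  congr 1
  unfold sphGrad
  rw [norm_sub_sq_real, inner_sub_right]
  simp only [inner_smul_right, inner_smul_left, real_inner_self_eq_norm_sq, norm_smul, hx,
    real_inner_comm (polyGrad P x) x]
  simp [real_inner_comm]
  ring

lemma critical_of_sphGrad {n : ℕ} (P : MvPolynomial (Fin n) ℝ) (x) (hx : ‖x‖ = 1)
    (h : sphGrad P x = 0) :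
    ∑ i, x i ^ 2 = 1 ∧
      (∀ i, MvPolynomial.eval (fun i => x i) (MvPolynomial.pderiv i P) =
        (∑ j, x j * MvPolynomial.eval (fun i => x i) (MvPolynomial.pderiv j P)) * x i) := by
  refine ⟨?_, fun i => ?_⟩
  · rw [← EuclideanSpace.real_norm_sq_eq, hx]; norm_num
  · have := congrArg (fun y : EuclideanSpace ℝ (Fin n) => y i) h
    simp only [sphGrad, hx, PiLp.sub_apply, PiLp.smul_apply, PiLp.zero_apply, smul_eq_mul,
      sub_eq_zero, one_pow, one_mul] at this
    rw [PiLp.inner_apply] at this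
    simpa [polyGrad] using this.symm

/-- For a nonzero homogeneous polynomial `ω : ℝⁿ → ℝ` there exists
`a₀ < 0` such that for every `a ∈ (a₀, 0)` the inclusion of
`{x : ‖x‖ = 1, ω x ≤ a}` into `Ω = {x : ‖x‖ = 1, ω x < 0}` is a homotopy equivalence. -/
theorem statement2 (n d : ℕ) (P : MvPolynomial (Fin n) ℝ) (hP0 : P ≠ 0)
    (hPhom : P.IsHomogeneous d)
    (ω : EuclideanSpace ℝ (Fin n) → ℝ)
    (hωP : ∀ x : EuclideanSpace ℝ (Fin n), ω x = MvPolynomial.eval (fun i => x i) P) :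
    ∃ a₀ < (0 : ℝ), ∀ a ∈ Ioo a₀ (0 : ℝ),
      ∃ h : ContinuousMap.HomotopyEquiv
        ↥{x : EuclideanSpace ℝ (Fin n) | ‖x‖ = 1 ∧ ω x ≤ a}
        ↥{x : EuclideanSpace ℝ (Fin n) | ‖x‖ = 1 ∧ ω x < 0},
      ∀ x : ↥{x : EuclideanSpace ℝ (Fin n) | ‖x‖ = 1 ∧ ω x ≤ a},
        ((h.toFun x : EuclideanSpace ℝ (Fin n)) = (x : EuclideanSpace ℝ (Fin n))) := by
  obtain ⟨a₀, ha₀, hcrit⟩ : ∃ a₀ < (0 : ℝ), ∀ x : EuclideanSpace ℝ (Fin n), ‖x‖ = 1 →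
      a₀ < ω x → ω x < 0 → sphGrad P x ≠ 0 := by
    have hfin := (finite_critical P).subset (t := {c : ℝ | ∃ x : EuclideanSpace ℝ (Fin n),
        ‖x‖ = 1 ∧ sphGrad P x = 0 ∧ ω x = c} \ {0}) (by
      rintro c ⟨⟨x, hx, h, rfl⟩, -⟩
      obtain ⟨h1, h2⟩ := critical_of_sphGrad P x hx h
      exact ⟨fun i => x i, h1, h2, (hωP x).symm⟩)
    have hev := hfin.isClosed.isOpen_compl.mem_nhds (x := (0 : ℝ)) (by simp)
    obtain ⟨ε, hε, hball⟩ := Metric.mem_nhds_iff.1 hev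
    refine ⟨-ε, by linarith, fun x hx h1 h2 h => ?_⟩
    refine hball (a := ω x) ?_ ⟨⟨x, hx, h, rfl⟩, h2.ne⟩
    rw [mem_ball, dist_zero_right, Real.norm_eq_abs, abs_lt]
    exact ⟨h1, by linarith⟩
  refine ⟨a₀, ha₀, fun a ha => ?_⟩
  have hωe : ω = fun x => MvPolynomial.eval (fun i => x i) P := funext hωP
  have hωc : Continuous ω := hωe ▸ (contDiff_eval P).continuous
  obtain ⟨φ, hφc, hφ⟩ := exists_flow (contDiff_sphField P) (norm_sphField_le P)
  have hSB : ∀ x : EuclideanSpace ℝ (Fin n), ‖x‖ = 1 → x ∈ closedBall (0 : EuclideanSpace ℝ (Fin n)) 1 := by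
    intro x hx; simp [hx]
  have hφS : ∀ x : EuclideanSpace ℝ (Fin n), ‖x‖ = 1 → ∀ t ∈ Ici (0 : ℝ), ‖φ (x, t)‖ = 1 := by
    intro x hx t ht
    have hd : ∀ s ∈ Ici (0 : ℝ), HasDerivWithinAt (fun s => ‖φ (x, s)‖ ^ 2) 0 (Ici 0) s := by
      intro s hs
      have := ((hφ x (hSB x hx)).2 s hs).norm_sq
      rwa [inner_sphField, mul_zero] at this
    have := constant_of_has_deriv_right_zero (f := fun s => ‖φ (x, s)‖ ^ 2) (a := 0) (b := t)
      (fun s hs => ((hd s hs.1).continuousWithinAt).mono Icc_subset_Ici_self)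
      (fun s hs => (hd s hs.1).mono (Ici_subset_Ici.2 hs.1)) t ⟨ht, le_rfl⟩
    simp only [(hφ x (hSB x hx)).1, hx, one_pow] at this
    nlinarith [norm_nonneg (φ (x, t))]
  let ρ : EuclideanSpace ℝ (Fin n) → ℝ := fun x =>
    (1 + ‖sphGrad P x‖ ^ 2)⁻¹ * ‖sphGrad P x‖ ^ 2
  have hρ0 : ∀ x, 0 ≤ ρ x := fun x => by positivity
  have hρc : Continuous ρ := by
    have := (contDiff_sphGrad P).continuous
    exact ((continuous_const.add (this.norm.pow 2)).inv₀ (fun x => by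
        have : (0 : ℝ) < 1 + ‖sphGrad P x‖ ^ 2 := by positivity
        exact this.ne')).mul
      (this.norm.pow 2)
  have hωd : ∀ x : EuclideanSpace ℝ (Fin n), ‖x‖ = 1 → ∀ t ∈ Ici (0 : ℝ),
      HasDerivWithinAt (fun s => ω (φ (x, s))) (- ρ (φ (x, t))) (Ici 0) t := by
    intro x hx t ht
    have h := hasDerivWithinAt_eval P ((hφ x (hSB x hx)).2 t ht)
    have h2 := inner_polyGrad_sphField P _ (hφS x hx t ht)
    rw [hωe]
    convert! h using 1
    rw [← h2, PiLp.inner_apply]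
    simp [polyGrad, mul_comm]
  have hcont : ∀ x : EuclideanSpace ℝ (Fin n), ‖x‖ = 1 →
      ContinuousOn (fun s => ω (φ (x, s))) (Ici 0) :=
    fun x hx t ht => (hωd x hx t ht).continuousWithinAt
  have hint : ∀ x : EuclideanSpace ℝ (Fin n), ‖x‖ = 1 → ∀ t ∈ interior (Ici (0 : ℝ)),
      HasDerivAt (fun s => ω (φ (x, s))) (- ρ (φ (x, t))) t := by
    intro x hx t ht
    exact (hωd x hx t (interior_subset ht)).hasDerivAt (mem_interior_iff_mem_nhds.1 ht)
  have hanti : ∀ x : EuclideanSpace ℝ (Fin n), ‖x‖ = 1 →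
      AntitoneOn (fun s => ω (φ (x, s))) (Ici 0) := by
    intro x hx
    refine antitoneOn_of_deriv_nonpos (convex_Ici 0) (hcont x hx)
      (fun t ht => (hint x hx t ht).differentiableAt.differentiableWithinAt) ?_
    intro t ht
    rw [(hint x hx t ht).deriv]
    linarith [hρ0 (φ (x, t))]
  refine exists_homotopyEquiv {x | ‖x‖ = 1} ω φ hωc
    (hφc.mono (prod_mono (fun x hx => hSB x hx) Subset.rfl)) hφS
    (fun x hx => (hφ x (hSB x hx)).1) hanti a ha.2 ?_
  intro x hx hx0
  by_contra! hcon
  have hx1 : ‖x‖ = 1 := hx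
  let C : Set (EuclideanSpace ℝ (Fin n)) := sphere 0 1 ∩ ω ⁻¹' Icc a (ω x)
  have hC : IsCompact C := (isCompact_sphere 0 1).inter_right (isClosed_Icc.preimage hωc)
  have hin : ∀ t ∈ Ici (0 : ℝ), φ (x, t) ∈ C := by
    intro t ht
    refine ⟨by simpa using hφS x hx1 t ht, hcon t ht, ?_⟩
    have := hanti x hx1 (mem_Ici.2 le_rfl) ht ht
    simpa [(hφ x (hSB x hx1)).1] using this
  obtain ⟨y, hy, hmin⟩ := hC.exists_isMinOn ⟨_, hin 0 (mem_Ici.2 le_rfl)⟩ hρc.continuousOn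
  have hδ : 0 < ρ y := by
    have hy1 : ‖y‖ = 1 := by simpa using hy.1
    have hne := hcrit y hy1 (lt_of_lt_of_le ha.1 hy.2.1) (lt_of_le_of_lt hy.2.2 hx0)
    have : 0 < ‖sphGrad P y‖ := norm_pos_iff.2 hne
    positivity
  have hlin : ∀ t ∈ Ici (0 : ℝ), ω (φ (x, t)) ≤ ω x - ρ y * t := by
    intro t ht
    have := Convex.image_sub_le_mul_sub_of_deriv_le (convex_Ici (0 : ℝ)) (hcont x hx1)
      (fun t ht => (hint x hx1 t ht).differentiableAt.differentiableWithinAt) (C := - ρ y)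
      (fun t ht => by
        rw [(hint x hx1 t ht).deriv]
        exact neg_le_neg (hmin (hin t (interior_subset ht)))) 0 (mem_Ici.2 le_rfl) t ht ht
    simp only [(hφ x (hSB x hx1)).1] at this
    linarith
  have hax : a ≤ ω x := by
    have := hcon 0 (mem_Ici.2 le_rfl)
    rwa [(hφ x (hSB x hx1)).1] at this
  have ht0 : (0 : ℝ) ≤ (ω x - a + 1) / ρ y := div_nonneg (by linarith) hδ.le
  have h1 := hlin _ ht0
  have h2 := hcon _ ht0
  rw [mul_div_cancel₀ _ hδ.ne'] at h1
  linarith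
end

section
/- Let f : ℝ^n → ℝ be analytic on an open neighborhood of the origin with f(0) = 0, let ω be the initial form of f of degree d, and let a < 0 be a regular value of the restriction of ω to the unit sphere S^{n-1}. Then there exists r₀ > 0 such that for every r ∈ (0, r₀), the sets {x ∈ S^{n-1} : f(r·x) ≤ a·r^d} and {x ∈ S^{n-1} : ω(x) ≤ a} are homeomorphic. -/
open Metric Set Asymptotics


theorem aux_diag_zero {E : Type*} [NormedAddCommGroup E] [NormedSpace ℝ E]
    (g : E → ℝ) (p : FormalMultilinearSeries ℝ E ℝ) (hp : HasFPowerSeriesAt g p 0) (d : ℕ)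
    (hg : g =O[nhds 0] fun x : E => ‖x‖ ^ (d + 1)) :
    ∀ k ≤ d, ∀ y : E, (p k fun _ => y) = 0 := by
  intro k
  induction k using Nat.strong_induction_on with
  | _ k ih =>
    intro hk y
    apply Asymptotics.IsBigO.continuousMultilinearMap_apply_eq_zero
    have h1 := hp.isBigO_sub_partialSum_pow (k + 1)
    simp only [zero_add] at h1
    have h2 : g =O[nhds 0] fun x : E => ‖x‖ ^ (k + 1) := by
      refine hg.trans ?_
      apply IsBigO.of_bound 1
      have : ∀ᶠ x : E in nhds 0, ‖x‖ < 1 := by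
        have := Metric.ball_mem_nhds (0 : E) one_pos
        filter_upwards [this] with x hx
        simpa using hx
      filter_upwards [this] with x hx
      rw [one_mul, norm_pow, norm_pow, norm_norm]
      exact pow_le_pow_of_le_one (norm_nonneg _) hx.le (by omega)
    have h3 := h2.sub h1
    refine h3.congr_left fun z => ?_
    simp only [sub_sub_cancel, FormalMultilinearSeries.partialSum]
    rw [Finset.sum_range_succ, Finset.sum_eq_zero, zero_add]
    intro i hi
    exact ih i (Finset.mem_range.1 hi) (by have := Finset.mem_range.1 hi; omega) z

theorem aux_fderiv_bigO {E : Type*} [NormedAddCommGroup E] [NormedSpace ℝ E]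
    (g : E → ℝ) (hga : AnalyticAt ℝ g 0) (d : ℕ)
    (hg : g =O[nhds 0] fun x : E => ‖x‖ ^ (d + 1)) :
    (fderiv ℝ g) =O[nhds 0] fun x : E => ‖x‖ ^ d := by
  obtain ⟨p, hp⟩ := hga
  have hz := aux_diag_zero g p hp d hg
  obtain ⟨r, hr⟩ := hp
  let q : FormalMultilinearSeries ℝ E ℝ := fun k => if k ≤ d then 0 else p k
  have hq : HasFPowerSeriesOnBall g q 0 r := by
    refine ⟨hr.r_le.trans (FormalMultilinearSeries.radius_le_of_le fun k => ?_), hr.r_pos, ?_⟩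
    · by_cases h : k ≤ d <;> simp [q, h]
    · intro y hy
      refine (hr.hasSum hy).congr_fun ?_
      intro k
      by_cases h : k ≤ d
      · simp [q, h, hz k h y]
      · simp [q, h]
  have hd := hq.fderiv.hasFPowerSeriesAt.isBigO_sub_partialSum_pow d
  simp only [zero_add] at hd
  refine hd.congr_left fun y => ?_
  rw [sub_eq_self]
  apply Finset.sum_eq_zero
  intro i hi
  have hi := Finset.mem_range.1 hi
  have this_zero : q (1 + i) = 0 := by simp [q]; omega
  have h0 : q.changeOriginSeries 1 i = 0 := by
    refine Finset.sum_eq_zero fun s _ => ?_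
    simp only [FormalMultilinearSeries.changeOriginSeriesTerm, this_zero]
    exact LinearIsometryEquiv.map_zero _
  simp [FormalMultilinearSeries.derivSeries, h0]

theorem aux_small {E : Type*} [NormedAddCommGroup E] [NormedSpace ℝ E]
    (g : E → ℝ) (hga : AnalyticAt ℝ g 0) (d : ℕ)
    (hg : g =O[nhds 0] fun x : E => ‖x‖ ^ (d + 1)) (η : ℝ) (hη : 0 < η) :
    ∃ r₀ > (0 : ℝ), ∀ r ∈ Ioo (0 : ℝ) r₀,
      (∀ x : E, ‖x‖ = 1 → |g (r • x) / r ^ d| ≤ η) ∧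
      (∀ x y : E, ‖x‖ = 1 → ‖y‖ = 1 →
        |g (r • x) / r ^ d - g (r • y) / r ^ d| ≤ η * ‖x - y‖) := by
  obtain ⟨C, hC0, hC⟩ := hg.exists_pos
  obtain ⟨D, hD0, hD⟩ := (aux_fderiv_bigO g hga d hg).exists_pos
  have hev := hga.eventually_analyticAt
  obtain ⟨ρ, hρ, hball⟩ := Metric.eventually_nhds_iff_ball.1
    ((isBigOWith_iff.1 hC).and ((isBigOWith_iff.1 hD).and hev))
  refine ⟨min ρ (min (η / C) (η / D)), by positivity, ?_⟩
  rintro r ⟨hr, hr'⟩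
  have h1 : r < ρ := hr'.trans_le (min_le_left _ _)
  have h2 : r * C < η := by
    rw [← lt_div_iff₀ hC0]; exact hr'.trans_le ((min_le_right _ _).trans (min_le_left _ _))
  have h3 : r * D < η := by
    rw [← lt_div_iff₀ hD0]; exact hr'.trans_le ((min_le_right _ _).trans (min_le_right _ _))
  have hrd : 0 < r ^ d := by positivity
  constructor
  · intro x hx
    have hn : ‖r • x‖ = r := by rw [norm_smul, hx, Real.norm_of_nonneg hr.le, mul_one]
    have := (hball (r • x) (by simpa [hn] using h1)).1
    rw [hn, Real.norm_eq_abs, norm_pow, Real.norm_of_nonneg hr.le] at this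
    rw [abs_div, abs_of_pos hrd, div_le_iff₀ hrd]
    calc _ ≤ _ := this
      _ = r * C * r ^ d := by ring
      _ ≤ _ := by gcongr
  · intro x y hx hy
    have hx' : ‖r • x‖ = r := by rw [norm_smul, hx, Real.norm_of_nonneg hr.le, mul_one]
    have hy' : ‖r • y‖ = r := by rw [norm_smul, hy, Real.norm_of_nonneg hr.le, mul_one]
    have hsub : ∀ z ∈ closedBall (0 : E) r, z ∈ ball (0 : E) ρ := fun z hz =>
      closedBall_subset_ball h1 hz
    have := (convex_closedBall (0 : E) r).norm_image_sub_le_of_norm_fderiv_le (𝕜 := ℝ)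
      (f := g) (C := D * r ^ d)
      (fun z hz => (hball z (hsub z hz)).2.2.differentiableAt)
      (fun z hz => by
        refine ((hball z (hsub z hz)).2.1).trans ?_
        rw [norm_pow, norm_norm]
        have : ‖z‖ ≤ r := by simpa using hz
        gcongr)
      (x := r • y) (y := r • x) (by simp [hy']) (by simp [hx'])
    rw [← smul_sub, norm_smul, Real.norm_of_nonneg hr.le, Real.norm_eq_abs] at this
    rw [← sub_div, abs_div, abs_of_pos hrd, div_le_iff₀ hrd]
    calc _ ≤ _ := this
      _ = (r * D) * (‖x - y‖ * r ^ d) := by ring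
      _ ≤ η * (‖x - y‖ * r ^ d) := by gcongr
      _ = _ := by ring

theorem aux_homeo {E : Type*} [NormedAddCommGroup E] [NormedSpace ℝ E] [CompleteSpace E]
    (Ψ : E → E) (h1 : ∀ x, ‖x‖ = 1 → ‖Ψ x‖ = 1) (h2 : ∀ x, ‖x‖ = 1 → ‖Ψ x - x‖ ≤ 1 / 6)
    (h3 : ∀ x y, ‖x‖ = 1 → ‖y‖ = 1 → ‖(Ψ x - x) - (Ψ y - y)‖ ≤ 1 / 6 * ‖x - y‖) :
    ∃ e : E ≃ₜ E, (∀ x, ‖e x‖ = ‖x‖) ∧ ∀ x, ‖x‖ = 1 → e x = Ψ x := by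
  let T : E → E := fun x => ‖x‖ • Ψ (‖x‖⁻¹ • x)
  have hn : ∀ x : E, x ≠ 0 → ‖‖x‖⁻¹ • x‖ = 1 := fun x hx => norm_smul_inv_norm (𝕜 := ℝ) hx
  have hT : ∀ x, x ≠ 0 → T x - x = ‖x‖ • (Ψ (‖x‖⁻¹ • x) - ‖x‖⁻¹ • x) := by
    intro x hx
    rw [smul_sub, smul_inv_smul₀ (norm_ne_zero_iff.2 hx)]
  have hTn : ∀ x, ‖T x‖ = ‖x‖ := by
    intro x
    by_cases hx : x = 0
    · simp [T, hx]
    · simp only [T, norm_smul, norm_norm, h1 _ (hn x hx), mul_one]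
  have hb : ∀ x, ‖T x - x‖ ≤ 1 / 6 * ‖x‖ := by
    intro x
    by_cases hx : x = 0
    · simp [T, hx]
    · rw [hT x hx, norm_smul, norm_norm, mul_comm]
      exact mul_le_mul_of_nonneg_right (h2 _ (hn x hx)) (norm_nonneg _)
  have hL : ∀ x y, ‖(T x - x) - (T y - y)‖ ≤ 1 / 2 * ‖x - y‖ := by
    intro x y
    by_cases hx : x = 0
    · subst hx
      have := hb y
      have h0 : T 0 = 0 := by simp [T]
      rw [h0, sub_zero, zero_sub, norm_neg, zero_sub, norm_neg]
      nlinarith [norm_nonneg y]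
    by_cases hy : y = 0
    · subst hy
      have := hb x
      have h0 : T 0 = 0 := by simp [T]
      rw [h0, sub_zero, sub_zero, sub_zero]
      nlinarith [norm_nonneg x]
    rw [hT x hx, hT y hy]
    set x' := ‖x‖⁻¹ • x with hx'
    set y' := ‖y‖⁻¹ • y with hy'
    have e1 : ‖x‖ • (Ψ x' - x') - ‖y‖ • (Ψ y' - y')
        = (‖x‖ - ‖y‖) • (Ψ x' - x') + ‖y‖ • ((Ψ x' - x') - (Ψ y' - y')) := by
      module
    have e2 : ‖y‖ • (x' - y') = (x - y) - (‖x‖ - ‖y‖) • x' := by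
      have ex : ‖x‖ • x' = x := smul_inv_smul₀ (norm_ne_zero_iff.2 hx) x
      have ey : ‖y‖ • y' = y := smul_inv_smul₀ (norm_ne_zero_iff.2 hy) y
      rw [sub_smul, smul_sub, ex, ey]; abel
    have hxy : |‖x‖ - ‖y‖| ≤ ‖x - y‖ := abs_norm_sub_norm_le x y
    have e3 : ‖y‖ * ‖x' - y'‖ ≤ 2 * ‖x - y‖ := by
      have : ‖‖y‖ • (x' - y')‖ = ‖y‖ * ‖x' - y'‖ := by rw [norm_smul, norm_norm]
      rw [← this, e2]
      refine (norm_sub_le _ _).trans ?_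
      rw [norm_smul, hn x hx, Real.norm_eq_abs]; linarith
    rw [e1]
    refine (norm_add_le _ _).trans ?_
    rw [norm_smul, norm_smul, norm_norm, Real.norm_eq_abs]
    have b1 : |‖x‖ - ‖y‖| * ‖Ψ x' - x'‖ ≤ ‖x - y‖ * (1 / 6) :=
      mul_le_mul hxy (h2 _ (hn x hx)) (norm_nonneg _) (norm_nonneg _)
    have b2 : ‖y‖ * ‖(Ψ x' - x') - (Ψ y' - y')‖ ≤ ‖y‖ * (1 / 6 * ‖x' - y'‖) :=
      mul_le_mul_of_nonneg_left (h3 _ _ (hn x hx) (hn y hy)) (norm_nonneg _)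
    linarith
  have hA : ApproximatesLinearOn T ((ContinuousLinearEquiv.refl ℝ E : E ≃L[ℝ] E) : E →L[ℝ] E)
      univ (1 / 2 : NNReal) := by
    intro x _ y _
    have := hL x y
    have e : T x - T y - (x - y) = (T x - x) - (T y - y) := by abel
    simpa [e] using this
  have hc : Subsingleton E ∨ (1 / 2 : NNReal) <
      ‖((ContinuousLinearEquiv.refl ℝ E).symm : E →L[ℝ] E)‖₊⁻¹ := by
    rcases subsingleton_or_nontrivial E with h | h
    · exact Or.inl h
    · right
      have : ((ContinuousLinearEquiv.refl ℝ E).symm : E →L[ℝ] E) = ContinuousLinearMap.id ℝ E := rfl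
      rw [this]
      have : ‖ContinuousLinearMap.id ℝ E‖₊ = 1 := by
        ext; simp
      rw [this, inv_one]
      exact NNReal.half_lt_self one_ne_zero
  refine ⟨hA.toHomeomorph T hc, fun x => hTn x, fun x hx => ?_⟩
  change T x = Ψ x
  simp [T, hx]

theorem aux_pos {X : Type*} [TopologicalSpace X] (C : Set X) (hC : IsCompact C) (m g : X → ℝ)
    (hm : Continuous m) (hg : Continuous g) (h : ∀ z ∈ C, m z ≤ 0 → 0 < g z) :
    ∃ ρ > (0 : ℝ), ∀ z ∈ C, m z ≤ ρ → ρ < g z := by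
  rcases C.eq_empty_or_nonempty with rfl | hne
  · exact ⟨1, one_pos, by simp⟩
  obtain ⟨z₀, hz₀, hmin⟩ := hC.exists_isMinOn hne (hm.max hg).continuousOn
  have hpos : 0 < max (m z₀) (g z₀) := by
    by_cases h0 : m z₀ ≤ 0
    · exact lt_max_of_lt_right (h z₀ hz₀ h0)
    · exact lt_max_of_lt_left (not_le.1 h0)
  refine ⟨max (m z₀) (g z₀) / 2, by positivity, fun z hz hmz => ?_⟩
  have : max (m z₀) (g z₀) ≤ max (m z) (g z) := hmin hz
  rcases le_max_iff.1 this with h' | h' <;> linarith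

/-- A jointly `C¹` function vanishing at `t = 0` has small Lipschitz constant for small `t`. -/
theorem aux_lip {E F : Type*} [NormedAddCommGroup E] [NormedSpace ℝ E] [FiniteDimensional ℝ E]
    [NormedAddCommGroup F] [NormedSpace ℝ F] (G : E × ℝ → F) (hG : ContDiff ℝ 1 G)
    (h0 : ∀ x, G (x, 0) = 0) (ε : ℝ) (hε : 0 < ε) :
    ∃ t₀ > (0 : ℝ), ∀ t, |t| ≤ t₀ → ∀ x y : E, ‖x‖ ≤ 1 → ‖y‖ ≤ 1 →
      ‖G (x, t) - G (y, t)‖ ≤ ε * ‖x - y‖ := by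
  let D : E × ℝ → (E →L[ℝ] F) := fun z => (fderiv ℝ G z).comp (ContinuousLinearMap.inl ℝ E ℝ)
  have hD : Continuous D := (hG.continuous_fderiv one_ne_zero).clm_comp continuous_const
  have hd : ∀ x t, HasFDerivAt (fun x => G (x, t)) (D (x, t)) x := by
    intro x t
    exact ((hG.differentiable one_ne_zero) (x, t)).hasFDerivAt.comp x (hasFDerivAt_prodMk_left x t)
  have hD0 : ∀ x, D (x, 0) = 0 := by
    intro x
    have h := hd x 0
    simp only [h0] at h
    exact h.unique (hasFDerivAt_const 0 x)
  have : ProperSpace E := FiniteDimensional.proper ℝ E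
  obtain ⟨ρ, hρ, H⟩ := aux_pos (closedBall (0 : E) 1 ×ˢ Icc (-1 : ℝ) 1)
    ((isCompact_closedBall _ _).prod isCompact_Icc) (fun z => |z.2|) (fun z => ε - ‖D z‖)
    (by fun_prop) (by fun_prop) (by
      rintro ⟨x, t⟩ _ ht
      have : t = 0 := by simpa using ht
      subst this
      simpa [hD0] using hε)
  refine ⟨min ρ 1, by positivity, fun t ht x y hx hy => ?_⟩
  refine (convex_closedBall (0 : E) 1).norm_image_sub_le_of_norm_hasFDerivWithin_le
    (f := fun x => G (x, t)) (fun z _ => (hd z t).hasFDerivWithinAt) (fun z hz => ?_)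
    (by simpa using hy) (by simpa using hx)
  have := H (z, t) ⟨hz, abs_le.1 (ht.trans (min_le_right _ _))⟩ (ht.trans (min_le_left _ _))
  linarith

/-- Solving `F x (σ x) = ω x + u x`. -/
theorem aux_solve {E : Type*} [NormedAddCommGroup E]
    (F : E → ℝ → ℝ) (ω u : E → ℝ) (K : Set E) (c t₀ ε η : ℝ) (hc : 0 < c) (ht₀ : 0 < t₀)
    (hε : 0 ≤ ε)
    (hmono : ∀ x ∈ K, ‖x‖ = 1 → ∀ s t, -t₀ ≤ s → s ≤ t → t ≤ t₀ → c * (t - s) ≤ F x t - F x s)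
    (hcont : ∀ x, Continuous (F x)) (hF0 : ∀ x, F x 0 = ω x)
    (hFε : ∀ t, |t| ≤ t₀ → ∀ x y, ‖x‖ = 1 → ‖y‖ = 1 →
      |(F x t - ω x) - (F y t - ω y)| ≤ ε * ‖x - y‖)
    (hη : η ≤ c * t₀) (hu : ∀ x, ‖x‖ = 1 → |u x| ≤ η)
    (huL : ∀ x y, ‖x‖ = 1 → ‖y‖ = 1 → |u x - u y| ≤ η * ‖x - y‖)
    (huK : ∀ x, ‖x‖ = 1 → x ∉ K → u x = 0) :
    ∃ σ : E → ℝ, (∀ x, ‖x‖ = 1 → |σ x| ≤ t₀ ∧ c * |σ x| ≤ η ∧ F x (σ x) = ω x + u x) ∧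
      ∀ x y, ‖x‖ = 1 → ‖y‖ = 1 → c * |σ x - σ y| ≤ (η + ε) * ‖x - y‖ := by
  have habs : ∀ x ∈ K, ‖x‖ = 1 → ∀ s t, |s| ≤ t₀ → |t| ≤ t₀ → c * |t - s| ≤ |F x t - F x s| := by
    intro x hx hx1 s t hs ht
    rw [abs_le] at hs ht
    rcases le_total s t with h | h
    · rw [abs_of_nonneg (sub_nonneg.2 h)]
      exact (hmono x hx hx1 s t hs.1 h ht.2).trans (le_abs_self _)
    · rw [abs_sub_comm t, abs_sub_comm (F x t), abs_of_nonneg (sub_nonneg.2 h)]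
      exact (hmono x hx hx1 t s ht.1 h hs.2).trans (le_abs_self _)
  have hex : ∀ x, ∃ s : ℝ, ‖x‖ = 1 → (|s| ≤ t₀ ∧ c * |s| ≤ |u x| ∧ F x s = ω x + u x) := by
    intro x
    by_cases hx1 : ‖x‖ = 1
    swap
    · exact ⟨0, fun h => absurd h hx1⟩
    by_cases hx : x ∈ K
    · have a1 := hmono x hx hx1 (-t₀) 0 le_rfl (by linarith) ht₀.le
      have a2 := hmono x hx hx1 0 t₀ (by linarith) ht₀.le le_rfl
      rw [hF0] at a1 a2
      have a3 := abs_le.1 (hu x hx1)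
      obtain ⟨s, hs, hs'⟩ := intermediate_value_Icc (by linarith : -t₀ ≤ t₀) (hcont x).continuousOn
        (show ω x + u x ∈ Icc (F x (-t₀)) (F x t₀) from ⟨by linarith, by linarith⟩)
      refine ⟨s, fun _ => ⟨abs_le.2 hs, ?_, hs'⟩⟩
      have := habs x hx hx1 0 s (by simpa using ht₀.le) (abs_le.2 hs)
      rwa [hs', hF0, sub_zero, add_sub_cancel_left] at this
    · exact ⟨0, fun _ => ⟨by simpa using ht₀.le, by simp, by rw [hF0, huK x hx1 hx, add_zero]⟩⟩
  choose σ hσ using hex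
  refine ⟨σ, fun x hx => ⟨(hσ x hx).1, (hσ x hx).2.1.trans (hu x hx), (hσ x hx).2.2⟩, ?_⟩
  have main : ∀ x y, ‖x‖ = 1 → ‖y‖ = 1 → x ∈ K → c * |σ x - σ y| ≤ (η + ε) * ‖x - y‖ := by
    intro x y hx hy hxK
    refine (habs x hxK hx (σ y) (σ x) (hσ y hy).1 (hσ x hx).1).trans ?_
    have b1 := hFε (σ y) (hσ y hy).1 x y hx hy
    have b2 := huL x y hx hy
    have : F x (σ x) - F x (σ y)
        = (u x - u y) - ((F x (σ y) - ω x) - (F y (σ y) - ω y)) := by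
      rw [(hσ x hx).2.2, (hσ y hy).2.2]; ring
    rw [this]
    refine (abs_sub _ _).trans ?_
    linarith
  intro x y hx hy
  by_cases hxK : x ∈ K
  · exact main x y hx hy hxK
  by_cases hyK : y ∈ K
  · rw [abs_sub_comm, norm_sub_rev]; exact main y x hy hx hyK
  have z1 : |σ x| ≤ 0 := by
    have := (hσ x hx).2.1
    rw [huK x hx hxK, abs_zero] at this
    exact nonpos_of_mul_nonpos_right this hc
  have z2 : |σ y| ≤ 0 := by
    have := (hσ y hy).2.1
    rw [huK y hy hyK, abs_zero] at this
    exact nonpos_of_mul_nonpos_right this hc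
  have z1' := abs_nonpos_iff.1 z1
  have z2' := abs_nonpos_iff.1 z2
  have b2 := (abs_nonneg _).trans (huL x y hx hy)
  rw [z1', z2', sub_zero, abs_zero, mul_zero]
  have := mul_nonneg hε (norm_nonneg (x - y))
  linarith

theorem aux_grad {E : Type*} [NormedAddCommGroup E] [InnerProductSpace ℝ E]
    [FiniteDimensional ℝ E] (ω : E → ℝ) (hω : ContDiff ℝ 2 ω) :
    ContDiff ℝ 1 (gradient ω) := by
  have e : gradient ω = fun x => ∑ i, (fderiv ℝ ω x (stdOrthonormalBasis ℝ E i)) •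
      (stdOrthonormalBasis ℝ E i) := by
    funext x
    rw [← (stdOrthonormalBasis ℝ E).sum_repr' (gradient ω x)]
    refine Finset.sum_congr rfl fun i _ => ?_
    congr 1
    rw [real_inner_comm]
    simp [gradient]
  rw [e]
  have h : ContDiff ℝ 1 (fderiv ℝ ω) := hω.fderiv_right (by norm_num)
  fun_prop

theorem aux_field {E : Type*} [NormedAddCommGroup E] [InnerProductSpace ℝ E]
    [FiniteDimensional ℝ E] (ω : E → ℝ) (hω : ContDiff ℝ 2 ω) (a : ℝ)
    (hreg : ∀ p : E, ‖p‖ = 1 → ω p = a → ¬ ∃ c : ℝ, gradient ω p = c • p) :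
    ∃ V : E → E, ContDiff ℝ 1 V ∧ (∀ x, inner ℝ x (V x) = 0) ∧
      ∀ p, ‖p‖ = 1 → ω p = a → 0 < fderiv ℝ ω p (V p) := by
  have hg := aux_grad ω hω
  refine ⟨fun x => (inner ℝ x x) • gradient ω x - (inner ℝ x (gradient ω x)) • x, ?_, ?_, ?_⟩
  · exact ((contDiff_id.inner ℝ contDiff_id).smul hg).sub
      ((contDiff_id.inner ℝ hg).smul contDiff_id)
  · intro x
    rw [inner_sub_right, inner_smul_right, inner_smul_right]; ring
  · intro p hp hpa
    have h1 : ∀ v, fderiv ℝ ω p v = inner ℝ (gradient ω p) v := fun v => by simp [gradient]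
    set G := gradient ω p with hG
    have hpp : inner ℝ p p = (1 : ℝ) := by rw [real_inner_self_eq_norm_sq, hp]; norm_num
    have hne : G - inner ℝ p G • p ≠ 0 := fun h =>
      hreg p hp hpa ⟨inner ℝ p G, sub_eq_zero.1 h⟩
    have : fderiv ℝ ω p (inner ℝ p p • G - inner ℝ p G • p)
        = inner ℝ (G - inner ℝ p G • p) (G - inner ℝ p G • p) := by
      rw [h1, hpp, one_smul]
      simp only [inner_sub_right, inner_sub_left, inner_smul_right, inner_smul_left, hpp,
        real_inner_comm p G]
      simp
    rw [this]
    exact real_inner_self_pos.2 hne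

/-- The curves on the sphere. -/
noncomputable def auxQ {E : Type*} [NormedAddCommGroup E] [InnerProductSpace ℝ E]
    (V : E → E) (z : E × ℝ) : E :=
  (√(1 + z.2 ^ 2 * inner ℝ (V z.1) (V z.1)))⁻¹ • (z.1 + z.2 • V z.1)

section
variable {E : Type*} [NormedAddCommGroup E] [InnerProductSpace ℝ E]

theorem auxQ_contDiff (V : E → E) (hV : ContDiff ℝ 1 V) : ContDiff ℝ 1 (auxQ V) := by
  have h1 : ContDiff ℝ 1 (fun z : E × ℝ => V z.1) := hV.comp contDiff_fst
  have hp : ∀ z : E × ℝ, 0 < 1 + z.2 ^ 2 * inner ℝ (V z.1) (V z.1) := fun z => by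
    have : 0 ≤ inner ℝ (V z.1) (V z.1) := real_inner_self_nonneg
    positivity
  have h2 : ContDiff ℝ 1 (fun z : E × ℝ => 1 + z.2 ^ 2 * inner ℝ (V z.1) (V z.1)) :=
    contDiff_const.add ((contDiff_snd.pow 2).mul (h1.inner ℝ h1))
  have h3 := (h2.sqrt fun z => (hp z).ne').inv fun z => (Real.sqrt_pos.2 (hp z)).ne'
  exact h3.smul (contDiff_fst.add (contDiff_snd.smul h1))

theorem auxQ_zero (V : E → E) (x : E) : auxQ V (x, 0) = x := by simp [auxQ]

theorem auxQ_norm (V : E → E) (hV : ∀ x, inner ℝ x (V x) = 0) (x : E) (hx : ‖x‖ = 1) (t : ℝ) :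
    ‖auxQ V (x, t)‖ = 1 := by
  have hp : 0 < 1 + t ^ 2 * inner ℝ (V x) (V x) := by
    have : 0 ≤ inner ℝ (V x) (V x) := real_inner_self_nonneg
    positivity
  have : ‖x + t • V x‖ = √(1 + t ^ 2 * inner ℝ (V x) (V x)) := by
    rw [eq_comm, Real.sqrt_eq_iff_eq_sq hp.le (norm_nonneg _), ← real_inner_self_eq_norm_sq,
      inner_add_left, inner_add_right, inner_add_right, inner_smul_left, inner_smul_right,
      inner_smul_right, real_inner_self_eq_norm_sq x, hx, hV x, inner_smul_left,
      real_inner_comm x (V x), hV x]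
    simp; ring
  rw [auxQ, norm_smul, this, norm_inv, Real.norm_of_nonneg (Real.sqrt_nonneg _)]
  exact inv_mul_cancel₀ (Real.sqrt_pos.2 hp).ne'

theorem auxQ_deriv (V : E → E) (x : E) : HasDerivAt (fun t => auxQ V (x, t)) (V x) 0 := by
  set v := inner ℝ (V x) (V x) with hv
  have h1 : HasDerivAt (fun t : ℝ => 1 + t ^ 2 * v) 0 0 := by
    have := (((hasDerivAt_id (0 : ℝ)).pow 2).mul_const v).const_add 1
    simpa using this
  have h2 := (h1.sqrt (by simp)).inv (by simp)
  have h3 : HasDerivAt (fun t : ℝ => x + t • V x) (V x) 0 := by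
    have := ((hasDerivAt_id (0 : ℝ)).smul_const (V x)).const_add x
    simpa using this
  have := h2.smul h3
  convert! this using 1
  simp
end

theorem aux_key {E : Type*} [NormedAddCommGroup E] [InnerProductSpace ℝ E]
    [FiniteDimensional ℝ E] (ω : E → ℝ) (hω : ContDiff ℝ 2 ω) (a : ℝ)
    (hreg : ∀ p : E, ‖p‖ = 1 → ω p = a → ¬ ∃ c : ℝ, gradient ω p = c • p) :
    ∃ η > (0 : ℝ), ∀ u : E → ℝ, (∀ x, ‖x‖ = 1 → |u x| ≤ η) →
      (∀ x y, ‖x‖ = 1 → ‖y‖ = 1 → |u x - u y| ≤ η * ‖x - y‖) →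
      Nonempty ({x : E // ‖x‖ = 1 ∧ ω x + u x ≤ a} ≃ₜ {x : E // ‖x‖ = 1 ∧ ω x ≤ a}) := by
  have hprop : ProperSpace E := FiniteDimensional.proper ℝ E
  obtain ⟨V, hV, hVt, hVpos⟩ := aux_field ω hω a hreg
  have hω1 : ContDiff ℝ 1 ω := hω.of_le (by norm_num)
  have hQ := auxQ_contDiff V hV
  set F : E × ℝ → ℝ := fun z => ω (auxQ V z) with hFdef
  have hF : ContDiff ℝ 1 F := hω1.comp hQ
  have hF0 : ∀ x, F (x, 0) = ω x := fun x => by simp [hFdef, auxQ_zero]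
  set dF : E × ℝ → ℝ := fun z => fderiv ℝ F z (0, 1) with hdF
  have hdFc : Continuous dF := (hF.continuous_fderiv one_ne_zero).clm_apply continuous_const
  have hdFd : ∀ x t, HasDerivAt (fun t => F (x, t)) (dF (x, t)) t := by
    intro x t
    have h1 : HasDerivAt (fun t : ℝ => ((x, t) : E × ℝ)) (0, 1) t :=
      (hasDerivAt_const t x).prodMk (hasDerivAt_id t)
    exact ((hF.differentiable one_ne_zero) (x, t)).hasFDerivAt.comp_hasDerivAt t h1
  have hdF0 : ∀ x, dF (x, 0) = fderiv ℝ ω x (V x) := by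
    intro x
    refine (hdFd x 0).unique ?_
    have h1 : HasFDerivAt ω (fderiv ℝ ω x) (auxQ V (x, 0)) := by
      rw [auxQ_zero]; exact ((hω1.differentiable one_ne_zero) x).hasFDerivAt
    exact h1.comp_hasDerivAt (0 : ℝ) (auxQ_deriv V x)
  obtain ⟨ρ, hρ, hρpos⟩ := aux_pos (sphere (0 : E) 1 ×ˢ Icc (-1 : ℝ) 1)
    ((isCompact_sphere _ _).prod isCompact_Icc) (fun z => max |ω z.1 - a| |z.2|) dF
    (((hω.continuous.comp continuous_fst).sub continuous_const).abs.max continuous_snd.abs) hdFc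
    (by
      rintro ⟨x, t⟩ ⟨hx, _⟩ hm
      have h1 := (le_max_left _ _).trans hm
      have h2 := (le_max_right _ _).trans hm
      have h1' := abs_nonpos_iff.1 h1
      have h2' : t = 0 := abs_nonpos_iff.1 h2
      subst h2'
      rw [hdF0]
      exact hVpos x (by simpa using hx) (sub_eq_zero.1 h1'))
  -- Lipschitz constants
  obtain ⟨M, hM⟩ := ContDiffOn.exists_lipschitzOnWith (s := closedBall (0 : E) 1 ×ˢ Icc (-1 : ℝ) 1)
    (f := auxQ V) hQ.contDiffOn one_ne_zero
    ((convex_closedBall _ _).prod (convex_Icc _ _))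
    ((isCompact_closedBall _ _).prod isCompact_Icc)
  obtain ⟨Lw, hLw⟩ := ContDiffOn.exists_lipschitzOnWith (s := closedBall (0 : E) 1)
    (f := ω) hω1.contDiffOn one_ne_zero (convex_closedBall _ _) (isCompact_closedBall _ _)
  have hMt : ∀ x, ‖x‖ = 1 → ∀ s t, |s| ≤ 1 → |t| ≤ 1 →
      ‖auxQ V (x, s) - auxQ V (x, t)‖ ≤ M * |s - t| := by
    intro x hx s t hs ht
    have hxb : x ∈ closedBall (0 : E) 1 := by simp [hx]
    have := hM.dist_le_mul (x, s) ⟨hxb, abs_le.1 hs⟩ (x, t) ⟨hxb, abs_le.1 ht⟩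
    rw [dist_eq_norm] at this
    refine this.trans (le_of_eq ?_)
    rw [Prod.dist_eq]
    simp [Real.dist_eq]
  have hLw' : ∀ x y, ‖x‖ = 1 → ‖y‖ = 1 → |ω x - ω y| ≤ Lw * ‖x - y‖ := by
    intro x y hx hy
    have := hLw.dist_le_mul x (by simp [hx]) y (by simp [hy])
    rwa [dist_eq_norm, dist_eq_norm] at this
  have hM0 : (0 : ℝ) ≤ M := M.2
  have hL0 : (0 : ℝ) ≤ Lw := Lw.2
  set ε : ℝ := ρ / (18 * (M + ρ)) with hεdef
  have hε : 0 < ε := by positivity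
  have hε1 : ε ≤ 1 / 18 := by
    rw [hεdef, div_le_div_iff₀ (by positivity) (by norm_num)]; nlinarith
  have hε2 : M * ε ≤ ρ * (1 / 18) := by
    rw [hεdef, ← mul_div_assoc, div_le_iff₀ (by positivity)]; nlinarith [mul_pos hρ hρ]
  obtain ⟨t₁, ht₁, H1⟩ := aux_lip (fun z : E × ℝ => F z - ω z.1)
    (hF.sub (hω1.comp contDiff_fst)) (fun x => by simp [hF0]) ε hε
  obtain ⟨t₂, ht₂, H2⟩ := aux_lip (fun z : E × ℝ => auxQ V z - z.1)
    (hQ.sub contDiff_fst) (fun x => by simp [auxQ_zero]) ε hε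
  obtain ⟨t₀, ht₀, ht1, ht2, ht3, ht4⟩ : ∃ t₀ > (0 : ℝ), t₀ ≤ 1 ∧ t₀ ≤ ρ ∧ t₀ ≤ t₁ ∧ t₀ ≤ t₂ :=
    ⟨min (min 1 ρ) (min t₁ t₂), by positivity, by simp, by simp, by simp, by simp⟩
  set δ : ℝ := ρ / 2 with hδdef
  have hδ : 0 < δ := by positivity
  obtain ⟨η', hη', he1, he2, he3⟩ : ∃ η' > (0 : ℝ), η' ≤ ε ∧ η' ≤ ρ * t₀ ∧ η' < δ :=
    ⟨min ε (min (ρ * t₀) (δ / 2)), by positivity, by simp, by simp, by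
      have : min ε (min (ρ * t₀) (δ / 2)) ≤ δ / 2 := by simp
      linarith⟩
  have hk : 0 < 1 + Lw / δ := by positivity
  refine ⟨η' / (1 + Lw / δ), by positivity, ?_⟩
  set η := η' / (1 + Lw / δ) with hη
  have hηη : η * (1 + Lw / δ) = η' := div_mul_cancel₀ _ hk.ne'
  have hη0 : 0 < η := by positivity
  have hηle : η ≤ η' := by
    rw [← hηη]; have : 0 ≤ Lw / δ := by positivity
    nlinarith
  intro u hu huL
  -- the cutoff
  set χ : E → ℝ := fun x => max 0 (min 1 (2 - |ω x - a| / δ)) with hχ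
  have hχ0 : ∀ x, 0 ≤ χ x := fun x => le_max_left _ _
  have hχ1 : ∀ x, χ x ≤ 1 := fun x => max_le zero_le_one (min_le_left _ _)
  have hχL : ∀ x y, ‖x‖ = 1 → ‖y‖ = 1 → |χ x - χ y| ≤ Lw / δ * ‖x - y‖ := by
    intro x y hx hy
    have h1 : |χ x - χ y| ≤ |(2 - |ω x - a| / δ) - (2 - |ω y - a| / δ)| := by
      simp only [hχ]
      generalize 2 - |ω x - a| / δ = s
      generalize 2 - |ω y - a| / δ = t
      have e1 := abs_max_sub_max_le_abs (min 1 s) (min 1 t) 0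
      have e2 := abs_min_sub_min_le_max 1 s 1 t
      rw [sub_self, abs_zero, max_eq_right (abs_nonneg _)] at e2
      rw [max_comm 0, max_comm 0]
      exact e1.trans e2
    have h2 : (2 - |ω x - a| / δ) - (2 - |ω y - a| / δ) = (|ω y - a| - |ω x - a|) / δ := by ring
    rw [h2, abs_div, abs_of_pos hδ] at h1
    refine h1.trans ?_
    rw [div_mul_eq_mul_div]
    refine div_le_div_of_nonneg_right ?_ hδ.le
    refine (abs_abs_sub_abs_le _ _).trans ?_
    rw [sub_sub_sub_cancel_right, abs_sub_comm]
    exact hLw' x y hx hy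
  have hu'b : ∀ x, ‖x‖ = 1 → |χ x * u x| ≤ η' := by
    intro x hx
    rw [abs_mul, abs_of_nonneg (hχ0 x)]
    refine (mul_le_of_le_one_left (abs_nonneg _) (hχ1 x)).trans ((hu x hx).trans hηle)
  have hu'L : ∀ x y, ‖x‖ = 1 → ‖y‖ = 1 → |χ x * u x - χ y * u y| ≤ η' * ‖x - y‖ := by
    intro x y hx hy
    have e : χ x * u x - χ y * u y = (χ x - χ y) * u x + χ y * (u x - u y) := by ring
    rw [e]
    refine (abs_add_le _ _).trans ?_
    rw [abs_mul, abs_mul, abs_of_nonneg (hχ0 y)]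
    have b1 : |χ x - χ y| * |u x| ≤ (Lw / δ * ‖x - y‖) * η :=
      mul_le_mul (hχL x y hx hy) (hu x hx) (abs_nonneg _) (by positivity)
    have b2 : χ y * |u x - u y| ≤ η * ‖x - y‖ :=
      (mul_le_of_le_one_left (abs_nonneg _) (hχ1 y)).trans (huL x y hx hy)
    rw [← hηη]
    linarith
  obtain ⟨σ, hσ, hσL⟩ := aux_solve (fun x t => F (x, t)) ω (fun x => χ x * u x)
    {x | |ω x - a| ≤ ρ} ρ t₀ ε η' hρ ht₀ hε.le
    (by
      intro x hxK hx s t hs hst ht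
      refine Convex.mul_sub_le_image_sub_of_le_deriv (convex_Icc (-t₀) t₀)
        (f := fun t => F (x, t)) (C := ρ)
        (fun z _ => (hdFd x z).continuousAt.continuousWithinAt)
        (fun z _ => (hdFd x z).differentiableAt.differentiableWithinAt)
        (fun z hz => ?_) s ⟨hs, hst.trans ht⟩ t ⟨hs.trans hst, ht⟩ hst
      have hz := interior_subset hz
      have hz' : |z| ≤ t₀ := abs_le.2 hz
      rw [(hdFd x z).deriv]
      exact (hρpos (x, z) ⟨by simpa using hx, abs_le.1 (hz'.trans ht1)⟩
        (max_le hxK (hz'.trans ht2))).le)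
    (fun x => hF.continuous.comp (by fun_prop)) hF0
    (fun t ht x y hx hy => H1 t (ht.trans ht3) x y hx.le hy.le)
    he2 hu'b hu'L
    (by
      intro x hx hxK
      have hxK' : ρ < |ω x - a| := not_le.1 hxK
      have : 2 - |ω x - a| / δ ≤ 0 := by
        rw [sub_nonpos, le_div_iff₀ hδ]; linarith
      have hz : χ x = 0 := max_eq_left ((min_le_right _ _).trans this)
      simp [hz])
  obtain ⟨e, he, heS⟩ := aux_homeo (fun x => auxQ V (x, σ x))
    (fun x hx => auxQ_norm V hVt x hx _)
    (by
      intro x hx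
      obtain ⟨s1, s2, -⟩ := hσ x hx
      have b := hMt x hx (σ x) 0 (s1.trans ht1) (by simp)
      rw [auxQ_zero, sub_zero] at b
      refine b.trans ?_
      have b2 : M * (ρ * |σ x|) ≤ M * ε := mul_le_mul_of_nonneg_left (s2.trans he1) hM0
      have b3 : ρ * (M * |σ x|) ≤ ρ * (1 / 18) := by linarith
      have := le_of_mul_le_mul_left b3 hρ
      linarith)
    (by
      intro x y hx hy
      obtain ⟨s1, -, -⟩ := hσ x hx
      obtain ⟨s2, -, -⟩ := hσ y hy
      have b1 := hMt x hx (σ x) (σ y) (s1.trans ht1) (s2.trans ht1)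
      have b2 := H2 (σ y) (s2.trans ht4) x y hx.le hy.le
      have eq : (auxQ V (x, σ x) - x) - (auxQ V (y, σ y) - y)
          = (auxQ V (x, σ x) - auxQ V (x, σ y))
            + ((auxQ V (x, σ y) - x) - (auxQ V (y, σ y) - y)) := by abel
      rw [eq]
      refine (norm_add_le _ _).trans ?_
      have hxy := norm_nonneg (x - y)
      have b3 : ρ * (M * |σ x - σ y|) ≤ ρ * (1 / 9 * ‖x - y‖) := by
        have c1 : M * (ρ * |σ x - σ y|) ≤ M * ((η' + ε) * ‖x - y‖) :=
          mul_le_mul_of_nonneg_left (hσL x y hx hy) hM0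
        have c2 : M * (η' + ε) ≤ ρ * (1 / 9) := by
          have := mul_le_mul_of_nonneg_left he1 hM0
          linarith
        have c3 := mul_le_mul_of_nonneg_right c2 hxy
        linarith
      have b4 := le_of_mul_le_mul_left b3 hρ
      have b5 := mul_le_mul_of_nonneg_right hε1 hxy
      have b2' : ‖auxQ V (x, σ y) - x - (auxQ V (y, σ y) - y)‖ ≤ ε * ‖x - y‖ := b2
      linarith)
  refine ⟨e.subtype fun x => ?_⟩
  rw [he]
  refine and_congr_right fun hx => ?_
  rw [heS x hx]
  have hFx : ω (auxQ V (x, σ x)) = ω x + χ x * u x := (hσ x hx).2.2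
  rw [hFx]
  by_cases hc : |ω x - a| ≤ δ
  · have : 1 ≤ 2 - |ω x - a| / δ := by
      have : |ω x - a| / δ ≤ 1 := (div_le_one hδ).2 hc
      linarith
    have h1 : χ x = 1 := by
      simp only [hχ]; rw [min_eq_left this]; simp
    rw [h1, one_mul]
  · have b1 := abs_le.1 (hu'b x hx)
    have b2 := abs_le.1 ((hu x hx).trans hηle)
    rcases lt_abs.1 (not_le.1 hc) with h | h
    · constructor <;> intro h' <;> linarith
    · constructor <;> intro h' <;> linarith

/-- For `f` analytic near the origin with `f 0 = 0`, initial form `ω` of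
degree `d`, and `a < 0` a regular value of `ω` restricted to the unit sphere (i.e. at every
`p` on the sphere with `ω p = a` the gradient `∇ω(p)` is not parallel to `p`), there is
`r₀ > 0` such that for every `r ∈ (0, r₀)` the sets `{x : ‖x‖ = 1, f (r•x) ≤ a r^d}` and
`{x : ‖x‖ = 1, ω x ≤ a}` are homeomorphic. -/
theorem statement3 (n d : ℕ) (f ω : EuclideanSpace ℝ (Fin n) → ℝ)
    (U : Set (EuclideanSpace ℝ (Fin n))) (hU : IsOpen U)
    (h0U : (0 : EuclideanSpace ℝ (Fin n)) ∈ U)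
    (hf : AnalyticOnNhd ℝ f U) (hf0 : f 0 = 0)
    (P : MvPolynomial (Fin n) ℝ) (hP0 : P ≠ 0) (hPhom : P.IsHomogeneous d)
    (hωP : ∀ x : EuclideanSpace ℝ (Fin n), ω x = MvPolynomial.eval (fun i => x i) P)
    (hg : (fun x : EuclideanSpace ℝ (Fin n) => f x - ω x) =O[nhds 0]
      fun x : EuclideanSpace ℝ (Fin n) => ‖x‖ ^ (d + 1))
    (a : ℝ) (ha : a < 0)
    (hreg : ∀ p : EuclideanSpace ℝ (Fin n), ‖p‖ = 1 → ω p = a →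
      ¬ ∃ c : ℝ, gradient ω p = c • p) :
    ∃ r₀ > (0 : ℝ), ∀ r ∈ Ioo (0 : ℝ) r₀,
      Nonempty
        (↥{x : EuclideanSpace ℝ (Fin n) | ‖x‖ = 1 ∧ f (r • x) ≤ a * r ^ d} ≃ₜ
         ↥{x : EuclideanSpace ℝ (Fin n) | ‖x‖ = 1 ∧ ω x ≤ a}) := by
  have hωc : ContDiff ℝ 2 ω := by
    have h : AnalyticOnNhd ℝ ω univ := by
      have := AnalyticOnNhd.eval_continuousLinearMap' (𝕜 := ℝ) (B := ℝ)
        (fun i : Fin n => (EuclideanSpace.proj i : EuclideanSpace ℝ (Fin n) →L[ℝ] ℝ)) P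
      refine this.congr isOpen_univ fun x _ => ?_
      rw [hωP]; rfl
    exact contDiffOn_univ.1 (h.contDiffOn uniqueDiffOn_univ)
  have hωa : AnalyticAt ℝ ω 0 := by
    have := AnalyticOnNhd.eval_continuousLinearMap' (𝕜 := ℝ) (B := ℝ)
      (fun i : Fin n => (EuclideanSpace.proj i : EuclideanSpace ℝ (Fin n) →L[ℝ] ℝ)) P
    refine (this 0 (mem_univ _)).congr (Filter.Eventually.of_forall fun x => ?_)
    rw [hωP]; rfl
  have hωh : ∀ (r : ℝ) (x : EuclideanSpace ℝ (Fin n)), ω (r • x) = r ^ d * ω x := by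
    intro r x
    rw [hωP, hωP]
    rw [MvPolynomial.eval_eq', MvPolynomial.eval_eq', Finset.mul_sum]
    refine Finset.sum_congr rfl fun m hm => ?_
    have hdeg : ∑ i, m i = d := by
      have := hPhom (MvPolynomial.mem_support_iff.1 hm)
      rw [← this, Finsupp.weight_apply, Finsupp.sum_fintype _ _ (by simp)]
      simp
    simp only [PiLp.smul_apply, smul_eq_mul, mul_pow, Finset.prod_mul_distrib,
      Finset.prod_pow_eq_pow_sum, hdeg]
    ring
  obtain ⟨η, hη, H⟩ := aux_key ω hωc a hreg
  obtain ⟨r₀, hr₀, Hr⟩ := aux_small (fun x => f x - ω x) ((hf 0 h0U).sub hωa) d hg η hη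
  refine ⟨r₀, hr₀, fun r hr => ?_⟩
  obtain ⟨h1, h2⟩ := Hr r hr
  obtain ⟨e⟩ := H (fun x => (f (r • x) - ω (r • x)) / r ^ d) h1 h2
  have hrd : 0 < r ^ d := pow_pos hr.1 d
  have hset : ∀ x : EuclideanSpace ℝ (Fin n), (‖x‖ = 1 ∧ f (r • x) ≤ a * r ^ d) ↔
      (‖x‖ = 1 ∧ ω x + (f (r • x) - ω (r • x)) / r ^ d ≤ a) := by
    intro x
    refine and_congr_right fun _ => ?_
    have : ω x + (f (r • x) - ω (r • x)) / r ^ d = f (r • x) / r ^ d := by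
      rw [hωh]; field_simp; ring
    rw [this, div_le_iff₀ hrd]
  exact ⟨((Homeomorph.refl _).subtype hset).trans e⟩
end
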